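/- arXiv:1909.00431 — 2 statements merged into one kernel-verified Lean document; each statement's English description precedes it below -/
import Mathlib

section
/- For each m ∈ ℕ, N_m ≥ ([m/2]+1)², where N_m is the minimal number of nodes of a cubature formula on S² with nonnegative weights exact on all polynomials of degree at most m, and [t] denotes the floor of t. -/
/-!
The lower bound is the classical dimension count. Put `k = ⌊m/2⌋`. There are `(k+1)²` polynomials of
degree at most `k` that are linearly independent on the sphere (`basisPoly`), so with fewer than
`(k+1)²` nodes a nontrivial combination `p` of them vanishes at every node. The cubature formula
applied to `p²`, of degree at most `m`, gives `∫ p² = 0`, so `p = 0` almost everywhere, which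
contradicts independence (`IsCubature.card_le`).

Since `sInf ∅ = 0` in `ℕ`, it must also be shown that some cubature formula exists
(`exists_isCubature`). This is Tchakaloff's argument: the average over the sphere of the vector of
monomials lies in the convex hull of the compact set of its values.

About the measure `μH[2]` only two facts are used: it is finite on the sphere, and a polynomial that
vanishes almost everywhere vanishes off the equator (`eval_eq_zero_of_ae`). The argument does not
depend on how the Hausdorff measure is normalized.
-/

open MeasureTheory Real

/-- The standard surface measure on the unit sphere `S² ⊆ ℝ³`, realized as the
2-dimensional Hausdorff measure (so that `μ(S²) = 4π`). -/
noncomputable def sphereMeasure :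
    Measure (Metric.sphere (0 : EuclideanSpace ℝ (Fin 3)) 1) := μH[2]

/-- Evaluation of a real polynomial on `ℝ³` at a point of the unit sphere. -/
noncomputable def sphereEval (p : MvPolynomial (Fin 3) ℝ)
    (x : Metric.sphere (0 : EuclideanSpace ℝ (Fin 3)) 1) : ℝ :=
  MvPolynomial.eval (fun j => (x : EuclideanSpace ℝ (Fin 3)) j) p

/-- `IsCubature m N x ν` : the points `x₁,…,x_N ∈ S²` with nonnegative weights
`ν₁,…,ν_N` form a cubature formula of degree of precision `m`:
`Σ νᵢ p(xᵢ) = (1/(4π)) ∫_{S²} p dμ` for every polynomial `p` of degree `≤ m`. -/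
noncomputable def IsCubature (m N : ℕ)
    (x : Fin N → Metric.sphere (0 : EuclideanSpace ℝ (Fin 3)) 1)
    (ν : Fin N → ℝ) : Prop :=
  (∀ i, 0 ≤ ν i) ∧
  ∀ p : MvPolynomial (Fin 3) ℝ, p.totalDegree ≤ m →
    ∑ i, ν i * sphereEval p (x i) =
      (1 / (4 * π)) * ∫ y, sphereEval p y ∂sphereMeasure

/-- `cubatureMinNodes m` (the number `N_m` of the paper): the minimal number of
nodes of a nonnegative-weight cubature formula on `S²` of degree of precision `m`. -/
noncomputable def cubatureMinNodes (m : ℕ) : ℕ :=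
  sInf {N : ℕ | ∃ x ν, IsCubature m N x ν}

/-! ### The surface measure -/

/-- The sphere is the image of a square under a Lipschitz map, so its measure is finite. -/
instance : IsFiniteMeasure sphereMeasure := by
  constructor
  -- spherical coordinates on the square `[-π, π]²`
  let f : (Fin 2 → ℝ) → EuclideanSpace ℝ (Fin 3) := fun v =>
    !₂[sin (v 0) * cos (v 1), sin (v 0) * sin (v 1), cos (v 0)]
  have hf : ContDiff ℝ 1 f := by
    rw [contDiff_euclidean]
    intro i
    fin_cases i <;> simp [f] <;> fun_prop
  have hK : IsCompact (Set.Icc (fun _ => -π : Fin 2 → ℝ) (fun _ => π)) := isCompact_Icc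
  obtain ⟨K, hKf⟩ := hf.contDiffOn.exists_lipschitzOnWith one_ne_zero (convex_Icc _ _) hK
  have hsub : Metric.sphere (0 : EuclideanSpace ℝ (Fin 3)) 1 ⊆
      f '' Set.Icc (fun _ => -π : Fin 2 → ℝ) (fun _ => π) := by
    intro x hx
    have hx1 : x 0 ^ 2 + x 1 ^ 2 + x 2 ^ 2 = 1 := by
      have := EuclideanSpace.norm_sq_eq x
      rw [mem_sphere_zero_iff_norm.1 hx, Fin.sum_univ_three] at this
      simpa using this.symm
    let w : ℂ := ⟨x 0, x 1⟩
    have hw : ‖w‖ = √(1 - x 2 ^ 2) := by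
      rw [Complex.norm_def, Complex.normSq_mk]
      congr 1
      linarith
    refine ⟨![arccos (x 2), w.arg], ⟨?_, ?_⟩, ?_⟩
    · intro i
      fin_cases i
      · simpa using by linarith [arccos_nonneg (x 2), pi_pos]
      · simpa using (Complex.neg_pi_lt_arg w).le
    · intro i
      fin_cases i
      · simpa using arccos_le_pi _
      · simpa using Complex.arg_le_pi w
    · ext i
      fin_cases i
      · change sin (arccos (x 2)) * cos w.arg = x 0
        rw [sin_arccos, ← hw]
        exact Complex.norm_mul_cos_arg w
      · change sin (arccos (x 2)) * sin w.arg = x 1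
        rw [sin_arccos, ← hw]
        exact Complex.norm_mul_sin_arg w
      · simpa [f] using cos_arccos (by nlinarith [sq_nonneg (x 0), sq_nonneg (x 1)])
          (by nlinarith [sq_nonneg (x 0), sq_nonneg (x 1)])
  have h2 : (μH[2] : Measure (Fin 2 → ℝ)) = volume := by
    simpa using hausdorffMeasure_pi_real (ι := Fin 2)
  calc sphereMeasure Set.univ
      = μH[2] (Metric.sphere (0 : EuclideanSpace ℝ (Fin 3)) 1) := by
        rw [sphereMeasure, ← isometry_subtype_coe.hausdorffMeasure_image (Or.inl zero_le_two),
          Set.image_univ, Subtype.range_coe]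
    _ ≤ _ := measure_mono hsub
    _ ≤ _ := hKf.hausdorffMeasure_image_le zero_le_two
    _ < ⊤ := by
        rw [h2]
        exact ENNReal.mul_lt_top (by simp) hK.measure_lt_top

/-- A polynomial that vanishes almost everywhere on the sphere vanishes at every point off the
equator: both open hemispheres are graphs over the unit disc, and the projection to the disc is
`1`-Lipschitz, so it maps a null set to a null set, while a nonempty open subset of the disc has
positive area. -/
lemma eval_eq_zero_of_ae (p : MvPolynomial (Fin 3) ℝ)
    (hp : (fun y => sphereEval p y) =ᵐ[sphereMeasure] 0) {σ : ℝ} (hσ : σ ^ 2 = 1) (v : Fin 2 → ℝ)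
    (hv : v 0 ^ 2 + v 1 ^ 2 < 1) :
    MvPolynomial.eval ![v 0, v 1, σ * √(1 - v 0 ^ 2 - v 1 ^ 2)] p = 0 := by
  by_contra hne
  let g : (Fin 2 → ℝ) → ℝ := fun v =>
    MvPolynomial.eval ![v 0, v 1, σ * √(1 - v 0 ^ 2 - v 1 ^ 2)] p
  have hg : Continuous g := by
    refine (MvPolynomial.continuous_eval p).comp (continuous_pi fun i => ?_)
    fin_cases i <;> simp <;> fun_prop
  -- the part of the open disc over which `p` does not vanish on the hemisphere chosen by `σ`
  let D : Set (Fin 2 → ℝ) := {v | v 0 ^ 2 + v 1 ^ 2 < 1} ∩ {v | g v ≠ 0}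
  have hD : IsOpen D :=
    (isOpen_lt (by fun_prop) (by fun_prop)).inter (isOpen_ne_fun hg continuous_const)
  let π₂ : Metric.sphere (0 : EuclideanSpace ℝ (Fin 3)) 1 → (Fin 2 → ℝ) := fun y => ![y.1 0, y.1 1]
  have hπ : LipschitzWith 1 π₂ := by
    refine LipschitzWith.of_dist_le_mul fun y z => ?_
    rw [NNReal.coe_one, one_mul, dist_pi_le_iff dist_nonneg, Subtype.dist_eq, dist_eq_norm]
    intro i
    fin_cases i
    · simpa [π₂, Real.dist_eq] using PiLp.norm_apply_le (y.1 - z.1) 0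
    · simpa [π₂, Real.dist_eq] using PiLp.norm_apply_le (y.1 - z.1) 1
  have hsub : D ⊆ π₂ '' {y | sphereEval p y ≠ 0} := by
    rintro u ⟨hu, hgu⟩
    have hu' : u 0 ^ 2 + u 1 ^ 2 < 1 := hu
    refine ⟨⟨!₂[u 0, u 1, σ * √(1 - u 0 ^ 2 - u 1 ^ 2)], ?_⟩, ?_, ?_⟩
    · rw [mem_sphere_zero_iff_norm, EuclideanSpace.norm_eq, Fin.sum_univ_three]
      simp [mul_pow, hσ, Real.sq_sqrt (show 0 ≤ 1 - u 0 ^ 2 - u 1 ^ 2 by linarith)]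
    · simpa [sphereEval, g] using hgu
    · ext i
      fin_cases i <;> simp [π₂]
  have h2 : (μH[2] : Measure (Fin 2 → ℝ)) = volume := by
    simpa using hausdorffMeasure_pi_real (ι := Fin 2)
  have h0 : volume D = 0 := by
    refine le_antisymm ?_ bot_le
    calc volume D = μH[2] D := by rw [h2]
      _ ≤ _ := measure_mono hsub
      _ ≤ _ := hπ.hausdorffMeasure_image_le zero_le_two _
      _ = 0 := by
        have : sphereMeasure {y | sphereEval p y ≠ 0} = 0 := hp
        rw [sphereMeasure] at this
        rw [this, mul_zero]
  have := (hD.measure_eq_zero_iff volume).1 h0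
  exact Set.notMem_empty v (this ▸ ⟨hv, hne⟩)

/-! ### Existence of cubature formulas -/

/-- By Carathéodory's theorem the convex hull is a continuous image of the product of a simplex
with finitely many copies of `s`. -/
lemma isCompact_convexHull_of_isCompact {E : Type*} [NormedAddCommGroup E] [NormedSpace ℝ E]
    [FiniteDimensional ℝ E] {s : Set E} (hs : IsCompact s) : IsCompact (convexHull ℝ s) := by
  classical
  rcases s.eq_empty_or_nonempty with rfl | ⟨s₀, hs₀⟩
  · simp
  let n := Module.finrank ℝ E + 1
  have hc : IsCompact ((fun q : (Fin n → ℝ) × (Fin n → E) => ∑ i, q.1 i • q.2 i) ''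
      (stdSimplex ℝ (Fin n) ×ˢ Set.univ.pi fun _ => s)) :=
    ((isCompact_stdSimplex ℝ (Fin n)).prod (isCompact_univ_pi fun _ => hs)).image (by fun_prop)
  convert hc
  apply Set.Subset.antisymm
  · intro x hx
    obtain ⟨ι, _, z, w, hz, haff, hw, hw1, rfl⟩ := eq_pos_convex_span_of_mem_convexHull hx
    have hcard : Fintype.card ι ≤ Fintype.card (Fin n) := by
      rw [Fintype.card_fin]
      exact haff.card_le_finrank_succ.trans (Nat.succ_le_succ (Submodule.finrank_le _))
    obtain ⟨e⟩ := Function.Embedding.nonempty_of_card_le hcard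
    -- outside the range of `e` the extended weights vanish
    have h0 : ∀ j ∉ Set.range e, Function.extend e w 0 j = 0 := fun j hj =>
      Function.extend_apply' _ _ _ hj
    refine ⟨(Function.extend e w 0, Function.extend e z fun _ => s₀), ⟨⟨?_, ?_⟩, ?_⟩, ?_⟩
    · intro j
      by_cases hj : j ∈ Set.range e
      · obtain ⟨i, rfl⟩ := hj
        simpa only [e.injective.extend_apply] using (hw i).le
      · exact (h0 j hj).ge
    · rw [← hw1]
      exact (Fintype.sum_of_injective e e.injective _ _ h0
        fun i => (e.injective.extend_apply _ _ i).symm).symm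
    · intro j _
      by_cases hj : j ∈ Set.range e
      · obtain ⟨i, rfl⟩ := hj
        simp only [e.injective.extend_apply]
        exact hz ⟨i, rfl⟩
      · simp only [Function.extend_apply' _ _ _ hj]
        exact hs₀
    · refine (Fintype.sum_of_injective e e.injective _ _ (fun j hj => ?_) fun i => ?_).symm
      · simp [h0 j hj]
      · simp [e.injective.extend_apply]
  · rintro _ ⟨q, ⟨hw, hz⟩, rfl⟩
    exact (convex_convexHull ℝ s).sum_mem (fun i _ => hw.1 i) hw.2
      fun i _ => subset_convexHull ℝ s (hz i trivial)

lemma continuous_sphereEval (p : MvPolynomial (Fin 3) ℝ) : Continuous (sphereEval p) :=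
  (MvPolynomial.continuous_eval p).comp (by fun_prop)

lemma integrable_sphereEval (p : MvPolynomial (Fin 3) ℝ) :
    Integrable (sphereEval p) sphereMeasure :=
  (continuous_sphereEval p).integrable_of_hasCompactSupport (HasCompactSupport.of_compactSpace _)

/-- Tchakaloff's theorem on the sphere: cubature formulas of every degree of precision exist. -/
theorem exists_isCubature (m : ℕ) : ∃ N x ν, IsCubature m N x ν := by
  classical
  rcases eq_or_ne sphereMeasure 0 with h0 | h0
  · exact ⟨0, Fin.elim0, Fin.elim0, fun i => i.elim0, fun p _ => by simp [h0]⟩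
  have : NeZero sphereMeasure := ⟨h0⟩
  -- a finite set of exponents containing those of all monomials of degree at most `m`
  let T : Finset (Fin 3 →₀ ℕ) := Finset.Iic (Finsupp.equivFunOnFinite.symm fun _ => m)
  let Φ : Metric.sphere (0 : EuclideanSpace ℝ (Fin 3)) 1 → (T → ℝ) := fun y d =>
    sphereEval (MvPolynomial.monomial d.1 1) y
  have hΦ : Continuous Φ := continuous_pi fun d => continuous_sphereEval _
  have hΦint : Integrable Φ sphereMeasure :=
    hΦ.integrable_of_hasCompactSupport (HasCompactSupport.of_compactSpace _)
  have hmem : ⨍ y, Φ y ∂sphereMeasure ∈ convexHull ℝ (Set.range Φ) :=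
    (convex_convexHull ℝ _).average_mem (isCompact_convexHull_of_isCompact (isCompact_range hΦ)).isClosed
      (Filter.Eventually.of_forall fun y => subset_convexHull ℝ _ ⟨y, rfl⟩) hΦint
  obtain ⟨ι, _, w, z, hw, -, hz, hsum⟩ := mem_convexHull_iff_exists_fintype.1 hmem
  choose x hx using hz
  have hM : sphereMeasure.real Set.univ ≠ 0 := measureReal_univ_ne_zero
  have hmono : ∀ d ∈ T, ∑ i, w i * sphereEval (MvPolynomial.monomial d 1) (x i) =
      (sphereMeasure.real Set.univ)⁻¹ *
        ∫ y, sphereEval (MvPolynomial.monomial d 1) y ∂sphereMeasure := by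
    intro d hd
    have := congrFun hsum ⟨d, hd⟩
    rw [average_eq, Pi.smul_apply, eval_integral fun j => integrable_sphereEval _] at this
    simpa [← hx, Φ] using this
  let e := Fintype.equivFin ι
  refine ⟨Fintype.card ι, x ∘ e.symm,
    fun i => sphereMeasure.real Set.univ / (4 * π) * w (e.symm i), fun i => ?_, fun p hp => ?_⟩
  · have := hw (e.symm i)
    positivity
  have hT : p.support ⊆ T := fun d hd => by
    refine Finset.mem_Iic.2 fun j => ?_
    refine (Finsupp.le_degree j d).trans ((MvPolynomial.le_totalDegree hd).trans hp)
  have hexp : ∀ y, sphereEval p y =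
      ∑ d ∈ p.support, p.coeff d * sphereEval (MvPolynomial.monomial d 1) y := by
    intro y
    simp [sphereEval, MvPolynomial.eval_eq']
  calc ∑ i, sphereMeasure.real Set.univ / (4 * π) * w (e.symm i) *
        sphereEval p ((x ∘ e.symm) i)
      = ∑ i, sphereMeasure.real Set.univ / (4 * π) * w i * sphereEval p (x i) :=
        e.symm.sum_comp fun i => sphereMeasure.real Set.univ / (4 * π) * w i * sphereEval p (x i)
    _ = ∑ d ∈ p.support, sphereMeasure.real Set.univ / (4 * π) * p.coeff d *
          ∑ i, w i * sphereEval (MvPolynomial.monomial d 1) (x i) := by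
        simp only [hexp, Finset.mul_sum]
        rw [Finset.sum_comm]
        exact Finset.sum_congr rfl fun d _ => Finset.sum_congr rfl fun i _ => by ring
    _ = ∑ d ∈ p.support, 1 / (4 * π) *
          ∫ y, p.coeff d * sphereEval (MvPolynomial.monomial d 1) y ∂sphereMeasure := by
        refine Finset.sum_congr rfl fun d hd => ?_
        rw [hmono d (hT hd), integral_const_mul]
        field_simp
    _ = 1 / (4 * π) * ∫ y, sphereEval p y ∂sphereMeasure := by
        simp only [hexp]
        rw [integral_finsetSum _ fun d _ => (integrable_sphereEval _).const_mul _,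
          Finset.mul_sum]

/-! ### The dimension count -/

/-- A family of `(k+1)²` polynomials of degree at most `k`, linearly independent on the sphere: the
monomials `x^a y^b` with `a + b ≤ k` and `z x^a y^b` with `a + b < k`. The pair `(i, j)` stands
for `x^i y^j` when `i + j ≤ k` and for `z x^(k-i) y^(k-j)` otherwise, so that the square
`{0,…,k}²` indexes both kinds. -/
noncomputable def basisPoly (k : ℕ) (ij : Fin (k + 1) × Fin (k + 1)) : MvPolynomial (Fin 3) ℝ :=
  if (ij.1 : ℕ) + ij.2 ≤ k then
    MvPolynomial.X 0 ^ (ij.1 : ℕ) * MvPolynomial.X 1 ^ (ij.2 : ℕ)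
  else
    MvPolynomial.X 2 * (MvPolynomial.X 0 ^ (k - ij.1) * MvPolynomial.X 1 ^ (k - ij.2))

lemma totalDegree_basisPoly_le (k : ℕ) (ij : Fin (k + 1) × Fin (k + 1)) :
    (basisPoly k ij).totalDegree ≤ k := by
  have hX : ∀ (a b : ℕ), (MvPolynomial.X 0 ^ a * MvPolynomial.X 1 ^ b :
      MvPolynomial (Fin 3) ℝ).totalDegree ≤ a + b := fun a b => by
    refine (MvPolynomial.totalDegree_mul _ _).trans ?_
    simp [MvPolynomial.totalDegree_X_pow]
  unfold basisPoly
  split_ifs with h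
  · exact (hX _ _).trans h
  · refine (MvPolynomial.totalDegree_mul _ _).trans ?_
    have := hX (k - ij.1) (k - ij.2)
    rw [MvPolynomial.totalDegree_X]
    omega

/-- Distinct monomials in two variables are linearly independent as functions on the unit disc. -/
lemma coeff_eq_zero_of_vanish {ι : Type*} [Fintype ι] {a b : ι → ℕ}
    (hab : Function.Injective fun i => (a i, b i)) {c : ι → ℝ}
    (h : ∀ v : Fin 2 → ℝ, v 0 ^ 2 + v 1 ^ 2 < 1 → ∑ i, c i * (v 0 ^ a i * v 1 ^ b i) = 0) (i : ι) :
    c i = 0 := by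
  classical
  let P : MvPolynomial (Fin 2) ℝ :=
    ∑ i, MvPolynomial.monomial (Finsupp.equivFunOnFinite.symm ![a i, b i]) (c i)
  have hP : P = 0 := by
    -- the disc contains the square `(-1/2, 1/2)²`, a product of infinite sets
    refine MvPolynomial.funext_set (fun _ => Set.Ioo (-(1 / 2)) (1 / 2))
      (fun _ => Set.Ioo_infinite (by norm_num)) fun v hv => ?_
    have h0 := hv 0 trivial
    have h1 := hv 1 trivial
    rw [map_zero, ← h v (by nlinarith [h0.1, h0.2, h1.1, h1.2])]
    simp [P, MvPolynomial.eval_monomial, Finsupp.prod_fintype]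
  have := congrArg (MvPolynomial.coeff (Finsupp.equivFunOnFinite.symm ![a i, b i])) hP
  rw [MvPolynomial.coeff_sum, Finset.sum_eq_single i] at this
  · simpa using this
  · intro j _ hj
    rw [MvPolynomial.coeff_monomial, if_neg]
    intro heq
    have := Finsupp.equivFunOnFinite.symm.injective heq
    exact hj (hab (Prod.ext (congrFun this 0) (congrFun this 1)))
  · simp

/-- A combination of the `basisPoly k` has the form `A(x, y) + z B(x, y)`; when it vanishes at
`(x, y, z)` and `(x, y, -z)` with `z ≠ 0`, both `A` and `B` vanish at `(x, y)`. -/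
lemma eq_zero_of_basisPoly_ae (k : ℕ) (c : Fin (k + 1) × Fin (k + 1) → ℝ)
    (h : (fun y => sphereEval (∑ ij, MvPolynomial.C (c ij) * basisPoly k ij) y)
      =ᵐ[sphereMeasure] 0) : c = 0 := by
  classical
  have key : ∀ v : Fin 2 → ℝ, v 0 ^ 2 + v 1 ^ 2 < 1 →
      (∑ ij : Fin (k + 1) × Fin (k + 1), (if (ij.1 : ℕ) + ij.2 ≤ k then c ij else 0) *
        (v 0 ^ (ij.1 : ℕ) * v 1 ^ (ij.2 : ℕ)) = 0) ∧
      (∑ ij : Fin (k + 1) × Fin (k + 1), (if (ij.1 : ℕ) + ij.2 ≤ k then 0 else c ij) *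
        (v 0 ^ (k - ij.1 : ℕ) * v 1 ^ (k - ij.2 : ℕ)) = 0) := by
    intro v hv
    set A := ∑ ij : Fin (k + 1) × Fin (k + 1), (if (ij.1 : ℕ) + ij.2 ≤ k then c ij else 0) *
        (v 0 ^ (ij.1 : ℕ) * v 1 ^ (ij.2 : ℕ)) with hA
    set B := ∑ ij : Fin (k + 1) × Fin (k + 1), (if (ij.1 : ℕ) + ij.2 ≤ k then 0 else c ij) *
        (v 0 ^ (k - ij.1 : ℕ) * v 1 ^ (k - ij.2 : ℕ)) with hB
    have hs : 0 < √(1 - v 0 ^ 2 - v 1 ^ 2) := Real.sqrt_pos.2 (by linarith)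
    have hAB : ∀ t : ℝ, MvPolynomial.eval ![v 0, v 1, t]
        (∑ ij, MvPolynomial.C (c ij) * basisPoly k ij) = A + t * B := by
      intro t
      rw [hA, hB, Finset.mul_sum, ← Finset.sum_add_distrib, map_sum]
      refine Finset.sum_congr rfl fun ij _ => ?_
      unfold basisPoly
      split_ifs <;> simp
      ring
    have h1 := eval_eq_zero_of_ae _ h (σ := 1) (by norm_num) v hv
    have h2 := eval_eq_zero_of_ae _ h (σ := -1) (by norm_num) v hv
    rw [hAB] at h1 h2
    have hB0 : √(1 - v 0 ^ 2 - v 1 ^ 2) * B = 0 := by linarith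
    have hB0 := (mul_eq_zero.1 hB0).resolve_left hs.ne'
    exact ⟨by simpa [hB0] using h1, hB0⟩
  funext ij
  by_cases hij : (ij.1 : ℕ) + ij.2 ≤ k
  · have := coeff_eq_zero_of_vanish (fun i j hij => by
      simp only [Prod.mk.injEq] at hij
      exact Prod.ext (Fin.ext hij.1) (Fin.ext hij.2)) (fun v hv => (key v hv).1) ij
    simpa [hij] using this
  · have := coeff_eq_zero_of_vanish (fun i j hij => by
      simp only [Prod.mk.injEq] at hij
      exact Prod.ext (Fin.ext (by omega)) (Fin.ext (by omega))) (fun v hv => (key v hv).2) ij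
    simpa [hij] using this

/-- Any cubature formula with nonnegative weights has at least `(⌊m/2⌋ + 1)²` nodes. -/
theorem IsCubature.card_le {m N : ℕ} {x : Fin N → Metric.sphere (0 : EuclideanSpace ℝ (Fin 3)) 1}
    {ν : Fin N → ℝ} (h : IsCubature m N x ν) : (m / 2 + 1) ^ 2 ≤ N := by
  by_contra! hN
  let k := m / 2
  let F : (Fin (k + 1) × Fin (k + 1) → ℝ) →ₗ[ℝ] (Fin N → ℝ) :=
    Fintype.linearCombination ℝ fun ij i => sphereEval (basisPoly k ij) (x i)
  obtain ⟨c, hc, hc0⟩ := (Submodule.ne_bot_iff _).1 (LinearMap.ker_ne_bot_of_finrank_lt (f := F)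
    (by simpa [k, sq] using hN))
  let p := ∑ ij, MvPolynomial.C (c ij) * basisPoly k ij
  have hpx : ∀ i, sphereEval p (x i) = 0 := fun i => by
    have := congrFun (LinearMap.mem_ker.1 hc) i
    simpa [F, Fintype.linearCombination_apply, p, sphereEval] using this
  have hpdeg : p.totalDegree ≤ k := by
    refine MvPolynomial.totalDegree_finsetSum_le fun ij _ => ?_
    refine (MvPolynomial.totalDegree_mul _ _).trans ?_
    simpa using totalDegree_basisPoly_le k ij
  have hdeg : (p ^ 2).totalDegree ≤ m := by
    refine (MvPolynomial.totalDegree_pow _ _).trans ?_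
    omega
  have hsq : ∀ y, sphereEval (p ^ 2) y = sphereEval p y ^ 2 := fun y => map_pow _ _ _
  have hint : ∫ y, sphereEval (p ^ 2) y ∂sphereMeasure = 0 := by
    have := h.2 _ hdeg
    simpa [hsq, hpx, pi_ne_zero] using this
  have hae := (integral_eq_zero_iff_of_nonneg (fun y => by simp only [hsq]; positivity)
    (integrable_sphereEval (p ^ 2))).1 hint
  refine hc0 (eq_zero_of_basisPoly_ae k c ?_)
  filter_upwards [hae] with y hy
  exact pow_eq_zero_iff two_ne_zero |>.1 ((hsq y).symm.trans hy)

/-- `N_m ≥ ([m/2]+1)²` (here `m/2` is the floor of `m/2`). -/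
theorem cubatureMinNodes_lower_bound (m : ℕ) :
    (m / 2 + 1) ^ 2 ≤ cubatureMinNodes m := by
  exact le_csInf (exists_isCubature m) fun _ ⟨_, _, h⟩ => h.card_le
end

section
/- Fourier coefficient lemma: Let m ∈ ℕ, α > 0, and v ∈ C^∞(D̄) with ∫_{S¹} e^v e^{ikθ} dθ = 0 for k = 1,…,m, satisfying Δv = 0 in the unit disk D and the boundary condition ∂v/∂ν + α = e^v (1 + Σ_{k=1}^m (c_k e^{ikθ} + c̄_k e^{−ikθ})) on S¹ for complex constants c₁,…,c_m. Then c_k = 0 for all 1 ≤ k ≤ m. -/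
/-!
Write `R(z) = ∑ c_k z^k`, `P = 1 + 2 Re R` and `b = e^v` on the circle. Since `v` is harmonic,
`w = z ∂_z v` is holomorphic in the disk with `w(0) = 0`, and on the circle `∂v/∂ν = 2 Re w`,
`∂_θ v = -2 Im w`.

Suppose first that `b P = α + 2 Re w` everywhere. By orthogonality `b = a + 2 Re B` with
`B = z^(m+1) β(z)`, and the spectral gap makes `B P` the boundary value of a holomorphic function;
comparing nonnegative modes gives `a = α` and `B P = w - α R` (`proj_identity`). In the same way
`∂_θ b = -2 Im (z^(m+1) γ)`, and `∂_θ b = b ∂_θ v` multiplied by `P` gives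
`z^(m+1) γ P = w² + α w`. Eliminating `w`, the function `|1 + R|²` is `P G` with `G` holomorphic
and `G(0) = 1`. So `G` is real on the circle, hence `G = 1`, and `|1 + R|² = 1 + 2 Re R` forces
`R = 0` (`coeff_eq_zero`, `case_normal`). The equation `b P = α` is handled in the same way
(`case_const`).

The value of `fderiv` at a boundary point is the normal derivative only where `v`, as a function on
the plane, is differentiable there; elsewhere it is `0`. With `M = b P - α` and `N = 2 Re w`, the
boundary condition therefore says that at every point `M = 0` or `M = N`, and the main difficulty
is to show that one alternative holds throughout (`no_mixing`). Suppose `M ≠ N` somewhere, so that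
`W = interior {M = 0}` is nonempty. At a boundary point of `W`, which may be taken to be `1` after
a rotation, both `M` and `N` are flat. Squaring the holomorphic function
`2 P w - i ∂_θ P = P N - i ∂_θ M / b` and using `∂_θ M (M - N) = 0` gives
`Im ((2 P w - i ∂_θ P)²) = -2 (P / b) M ∂_θ M`. By flatness the mean value property may be applied
after multiplication by a high power of the pole at `1`, so `(P / b) M ∂_θ M` is orthogonal to
`cos(t/2) / sin(t/2)^(2k+1)` for all large `k` (`integral_weight`). After an integration by parts
this says that `M²` has integral `0` against a weight which, as `P / b > 0` at `1`, is positive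
near `1` and larger there than elsewhere by an exponential factor in `k`. Hence `M = 0` near `1`
(`eventually_zero_of_dens`), a contradiction; so `W` is closed, and is the whole circle.
-/

open MeasureTheory Real Filter Topology

/-! ### Functions holomorphic in the disk -/

/-- The point `e^{iθ}` of the unit circle. -/
noncomputable def cis (θ : ℝ) : ℂ := Complex.exp (θ * Complex.I)

/-- `F` is holomorphic in the open unit disk and continuous up to the boundary. -/
abbrev DiskHol (F : ℂ → ℂ) : Prop := DiffContOnCl ℂ F (Metric.ball 0 1)

lemma cis_def (θ : ℝ) : cis θ = Complex.exp (θ * Complex.I) := rfl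

@[simp] lemma norm_cis (θ : ℝ) : ‖cis θ‖ = 1 := Complex.norm_exp_ofReal_mul_I θ

lemma cis_ne_zero (θ : ℝ) : cis θ ≠ 0 := Complex.exp_ne_zero _

lemma conj_cis (θ : ℝ) : (starRingEnd ℂ) (cis θ) = (cis θ)⁻¹ :=
  (Complex.inv_eq_conj (norm_cis θ)).symm

lemma cis_pow (θ : ℝ) (k : ℕ) : cis θ ^ k = Complex.exp (k * θ * Complex.I) := by
  rw [cis, ← Complex.exp_nat_mul]; ring_nf

lemma cis_add (s t : ℝ) : cis (s + t) = cis s * cis t := by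
  rw [cis, cis, cis, ← Complex.exp_add]; push_cast; ring_nf

lemma cis_eq (θ : ℝ) : cis θ = Real.cos θ + Real.sin θ * Complex.I := by
  rw [cis, Complex.exp_mul_I]; push_cast; rfl

lemma periodic_cis : Function.Periodic cis (2 * π) := by
  intro θ
  rw [cis_add]
  have : cis (2 * π) = 1 := by simp [cis_eq]
  rw [this, mul_one]

lemma hasDerivAt_cis (θ : ℝ) : HasDerivAt cis (Complex.I * cis θ) θ := by
  have h := (((Complex.ofRealCLM.hasDerivAt (x := θ)).mul_const Complex.I)).cexp
  simp only [Complex.ofRealCLM_apply, Complex.ofReal_one, one_mul] at h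
  rw [mul_comm]; exact h

lemma contDiff_cis {n : WithTop ℕ∞} : ContDiff ℝ n cis := by
  unfold cis
  exact ((Complex.ofRealCLM.contDiff).mul contDiff_const).cexp

lemma continuous_cis : Continuous cis := (contDiff_cis (n := 0)).continuous

lemma cis_mem (θ : ℝ) : cis θ ∈ Metric.closedBall (0 : ℂ) 1 := by simp

lemma DiskHol.continuousOn_closedBall {F : ℂ → ℂ} (hF : DiskHol F) :
    ContinuousOn F (Metric.closedBall 0 1) := by
  have := hF.continuousOn
  rwa [closure_ball (0 : ℂ) one_ne_zero] at this

lemma DiskHol.of {F : ℂ → ℂ} (hd : DifferentiableOn ℂ F (Metric.ball 0 1))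
    (hc : ContinuousOn F (Metric.closedBall 0 1)) : DiskHol F :=
  ⟨hd, by rwa [closure_ball (0 : ℂ) one_ne_zero]⟩

lemma DiskHol.continuous_cis {F : ℂ → ℂ} (hF : DiskHol F) : Continuous fun θ => F (cis θ) :=
  hF.continuousOn_closedBall.comp_continuous _root_.continuous_cis cis_mem

lemma DiskHol.mul {F G : ℂ → ℂ} (hF : DiskHol F) (hG : DiskHol G) :
    DiskHol fun z => F z * G z :=
  ⟨hF.1.mul hG.1, hF.2.mul hG.2⟩

lemma DiskHol.pow {F : ℂ → ℂ} (hF : DiskHol F) (n : ℕ) : DiskHol fun z => F z ^ n :=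
  ⟨hF.1.pow n, hF.2.pow n⟩

lemma diskHol_of_differentiable {F : ℂ → ℂ} (hF : Differentiable ℂ F) : DiskHol F :=
  hF.diffContOnCl

lemma DiskHol.integral_eq {F : ℂ → ℂ} (hF : DiskHol F) :
    ∫ θ in (0 : ℝ)..(2 * π), F (cis θ) = 2 * π * F 0 := by
  have h : circleAverage F 0 1 = F 0 := by
    apply DiffContOnCl.circleAverage
    simpa using hF
  rw [circleAverage_def] at h
  have hp : (2 * π : ℂ) ≠ 0 := by
    simp [Real.pi_ne_zero]
  rw [← h]
  simp only [circleMap, zero_add, Complex.ofReal_one, one_mul, cis, Complex.real_smul]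
  push_cast
  rw [mul_inv_cancel_left₀ hp]

/-- A function holomorphic in the disk which is real on the circle and vanishes at the centre
vanishes on the circle: the mean of its square is `0`, and that is the mean of a nonnegative
function. -/
lemma DiskHol.eq_zero_of_im {F : ℂ → ℂ} (hF : DiskHol F) (h0 : F 0 = 0)
    (him : ∀ θ, (F (cis θ)).im = 0) (θ : ℝ) : F (cis θ) = 0 := by
  have hre : ∀ t, F (cis t) = ((F (cis t)).re : ℂ) := fun t => by
    apply Complex.ext <;> simp [him t]
  have h1 := (hF.mul hF).integral_eq
  simp only [h0, mul_zero] at h1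
  have h2 : ∫ t in (0 : ℝ)..(2 * π), (F (cis t)).re ^ 2 = 0 := by
    have : ∫ t in (0 : ℝ)..(2 * π), (((F (cis t)).re ^ 2 : ℝ) : ℂ) = 0 := by
      rw [← h1]
      congr 1; ext t
      rw [hre t]; push_cast; simp [sq]
    rw [intervalIntegral.integral_ofReal] at this
    exact_mod_cast this
  have hcont : Continuous fun t => (F (cis t)).re ^ 2 :=
    (Complex.continuous_re.comp hF.continuous_cis).pow 2
  obtain ⟨y, hy, hxy⟩ := periodic_cis.exists_mem_Ico₀ (by positivity) θ
  have h3 : (F (cis y)).re ^ 2 = 0 := by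
    by_contra hne
    have hpos : 0 < (F (cis y)).re ^ 2 := lt_of_le_of_ne (sq_nonneg _) (Ne.symm hne)
    have := intervalIntegral.integral_pos (a := 0) (b := 2 * π) (by positivity)
      hcont.continuousOn (fun x _ => sq_nonneg _) ⟨y, ⟨hy.1, hy.2.le⟩, hpos⟩
    linarith
  rw [hxy, hre y]
  simpa using h3

/-- A power series with absolutely summable coefficients defines a function holomorphic in the
disk and continuous up to the boundary. -/
lemma diskHol_tsum {a : ℕ → ℂ} (ha : Summable fun n => ‖a n‖) :
    DiskHol fun z => ∑' n, a n * z ^ n := by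
  have hb : ∀ n, ∀ z ∈ Metric.closedBall (0 : ℂ) 1, ‖a n * z ^ n‖ ≤ ‖a n‖ := by
    intro n z hz
    rw [norm_mul, norm_pow]
    have : ‖z‖ ≤ 1 := by simpa using hz
    exact mul_le_of_le_one_right (norm_nonneg _) (pow_le_one₀ (norm_nonneg _) this)
  apply DiskHol.of
  · apply Complex.differentiableOn_tsum_of_summable_norm ha
    · intro n; fun_prop
    · exact Metric.isOpen_ball
    · exact fun n z hz => hb n z (Metric.ball_subset_closedBall hz)
  · exact continuousOn_tsum (fun n => by fun_prop) ha hb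

lemma summable_pow_cis {a : ℕ → ℂ} (ha : Summable fun n => ‖a n‖) (θ : ℝ) :
    Summable fun n => a n * cis θ ^ n := by
  apply Summable.of_norm
  simpa using ha

/-! ### Fourier series of smooth periodic functions -/

/-- The `n`-th Fourier coefficient of a function of the angle. -/
noncomputable def fcoef (g : ℝ → ℂ) (n : ℤ) : ℂ :=
  (2 * π : ℂ)⁻¹ * ∫ θ in (0 : ℝ)..(2 * π), g θ * cis θ ^ (-n)

lemma continuous_cis_zpow (n : ℤ) : Continuous fun θ => cis θ ^ n :=
  continuous_cis.zpow₀ n fun θ => Or.inl (cis_ne_zero θ)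

lemma norm_cis_zpow (n : ℤ) (θ : ℝ) : ‖cis θ ^ n‖ = 1 := by simp

lemma hasDerivAt_cis_zpow (n : ℤ) (θ : ℝ) :
    HasDerivAt (fun t => cis t ^ n) (Complex.I * n * cis θ ^ n) θ := by
  have h := (hasDerivAt_zpow n (cis θ) (Or.inl (cis_ne_zero θ))).comp θ (hasDerivAt_cis θ)
  have e : (n : ℂ) * cis θ ^ (n - 1) * (Complex.I * cis θ) = Complex.I * n * cis θ ^ n := by
    rw [zpow_sub_one₀ (cis_ne_zero θ)]
    have := cis_ne_zero θ
    field_simp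
  rw [e] at h
  exact h

lemma periodic_cis_zpow (n : ℤ) : Function.Periodic (fun θ => cis θ ^ n) (2 * π) := fun θ => by
  show cis (θ + 2 * π) ^ n = cis θ ^ n
  rw [periodic_cis]

lemma fcoef_deriv {g g' : ℝ → ℂ} (hg : ∀ θ, HasDerivAt g (g' θ) θ) (hg' : Continuous g')
    (hp : Function.Periodic g (2 * π)) (n : ℤ) :
    fcoef g' n = Complex.I * n * fcoef g n := by
  have hgc : Continuous g := continuous_iff_continuousAt.2 fun θ => (hg θ).continuousAt
  have hd : ∀ θ, HasDerivAt (fun t => g t * cis t ^ (-n))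
      (g' θ * cis θ ^ (-n) + g θ * (Complex.I * (-n : ℤ) * cis θ ^ (-n))) θ :=
    fun θ => (hg θ).mul (hasDerivAt_cis_zpow (-n) θ)
  have c1 : Continuous fun θ => g' θ * cis θ ^ (-n) := hg'.mul (continuous_cis_zpow _)
  have c2 : Continuous fun θ => g θ * (Complex.I * (-n : ℤ) * cis θ ^ (-n)) :=
    hgc.mul (continuous_const.mul (continuous_cis_zpow _))
  have h := intervalIntegral.integral_eq_sub_of_hasDerivAt (a := 0) (b := 2 * π)
    (fun θ _ => hd θ) ((c1.add c2).intervalIntegrable _ _)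
  have hper : g (2 * π) * cis (2 * π) ^ (-n) - g 0 * cis 0 ^ (-n) = 0 := by
    have h1 := hp 0
    have h2 := periodic_cis 0
    rw [zero_add] at h1 h2
    rw [h1, h2, sub_self]
  rw [hper, intervalIntegral.integral_add (c1.intervalIntegrable _ _) (c2.intervalIntegrable _ _)]
    at h
  have e : ∫ θ in (0 : ℝ)..(2 * π), g θ * (Complex.I * (-n : ℤ) * cis θ ^ (-n))
      = -(Complex.I * n) * ∫ θ in (0 : ℝ)..(2 * π), g θ * cis θ ^ (-n) := by
    rw [← intervalIntegral.integral_const_mul]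
    congr 1; ext θ; push_cast; ring
  rw [e] at h
  unfold fcoef
  linear_combination (2 * π : ℂ)⁻¹ * h

lemma norm_fcoef_le {g : ℝ → ℂ} {C : ℝ} (hC : ∀ θ, ‖g θ‖ ≤ C) (n : ℤ) :
    ‖fcoef g n‖ ≤ C := by
  have h := intervalIntegral.norm_integral_le_of_norm_le_const (a := 0) (b := 2 * π)
    (f := fun θ => g θ * cis θ ^ (-n)) (C := C) (fun θ _ => by
      rw [norm_mul, norm_cis_zpow, mul_one]; exact hC θ)
  unfold fcoef
  rw [norm_mul, norm_inv]
  have hpi : ‖(2 * π : ℂ)‖ = 2 * π := by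
    simp [abs_of_pos Real.pi_pos]
  have hp : |2 * π - 0| = 2 * π := by rw [sub_zero, abs_of_pos (by positivity)]
  rw [hp] at h
  rw [hpi]
  calc (2 * π)⁻¹ * _ ≤ (2 * π)⁻¹ * (C * (2 * π)) := by gcongr
    _ = C := by field_simp

lemma fcoef_conj (g : ℝ → ℝ) (n : ℤ) :
    fcoef (fun θ => (g θ : ℂ)) (-n) = (starRingEnd ℂ) (fcoef (fun θ => (g θ : ℂ)) n) := by
  unfold fcoef
  rw [map_mul, ← intervalIntegral.intervalIntegral_conj]
  congr 1
  · simp only [map_inv₀, map_mul, Complex.conj_ofReal, map_ofNat]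
  · congr 1; ext θ
    simp [conj_cis]

/-- Pointwise convergence of the Fourier series when the coefficients are summable. -/
lemma hasSum_fcoef {g : ℝ → ℂ} (hg : Continuous g) (hp : Function.Periodic g (2 * π))
    (hs : Summable (fcoef g)) (θ : ℝ) :
    HasSum (fun n : ℤ => fcoef g n * cis θ ^ n) (g θ) := by
  have : Fact (0 < 2 * π) := ⟨by positivity⟩
  let G : C(AddCircle (2 * π), ℂ) := ⟨hp.lift, continuous_coinduced_dom.mpr hg⟩
  have hfour : ∀ (n : ℤ) (t : ℝ), fourier n (t : AddCircle (2 * π)) = cis t ^ n := by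
    intro n t
    rw [fourier_coe_apply, cis, ← Complex.exp_int_mul]
    congr 1
    have : (π : ℂ) ≠ 0 := by simp [Real.pi_ne_zero]
    push_cast
    field_simp
  have hco : fourierCoeff G = fcoef g := by
    ext n
    rw [fourierCoeff_eq_intervalIntegral _ _ 0, zero_add]
    simp only [hfour, fcoef, Complex.real_smul, smul_eq_mul]
    push_cast
    rw [one_div]
    congr 2
    ext t
    rw [mul_comm]; rfl
  have h := has_pointwise_sum_fourier_series_of_summable (f := G) (by rw [hco]; exact hs) θ
  rw [hco] at h
  simp only [hfour, smul_eq_mul] at h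
  exact h

/-- The Fourier series of a real function, folded onto the frequencies `≥ m + 1` when those of
absolute value in `1, …, m` are absent. -/
lemma eq_re_tsum {g : ℝ → ℝ} (hg : Continuous g) (hp : Function.Periodic g (2 * π))
    (hs : Summable (fcoef fun θ => (g θ : ℂ))) (m : ℕ)
    (hgap : ∀ k : ℕ, 1 ≤ k → k ≤ m → fcoef (fun θ => (g θ : ℂ)) k = 0) (θ : ℝ) :
    g θ = (fcoef (fun θ => (g θ : ℂ)) 0).re + 2 * (cis θ ^ (m + 1) *
      ∑' n : ℕ, fcoef (fun θ => (g θ : ℂ)) ((n + m + 1 : ℕ) : ℤ) * cis θ ^ n).re := by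
  set a := fcoef fun θ => (g θ : ℂ) with ha
  have hp' : Function.Periodic (fun θ => (g θ : ℂ)) (2 * π) := fun t => by
    show ((g (t + 2 * π) : ℝ) : ℂ) = _
    rw [hp]
  have h := (hasSum_fcoef (g := fun θ => (g θ : ℂ)) (Complex.continuous_ofReal.comp hg) hp' hs θ).nat_add_neg
  have h2 : HasSum (fun n : ℕ => 2 * (a n * cis θ ^ n).re) (g θ + (a 0).re) := by
    have h3 := Complex.hasSum_re h
    simp only [zpow_zero, mul_one, Complex.add_re, Complex.ofReal_re] at h3
    convert! h3 using 1
    ext n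
    have e : a (-(n : ℤ)) * cis θ ^ (-(n : ℤ)) = (starRingEnd ℂ) (a n * cis θ ^ n) := by
      rw [ha, fcoef_conj, map_mul, map_pow, conj_cis]; simp
    have e2 : (a (-(n : ℤ)) * cis θ ^ (-(n : ℤ))).re = (a n * cis θ ^ n).re := by
      rw [e, Complex.conj_re]
    rw [← ha, e2, zpow_natCast]
    ring
  have hs' : Summable fun n : ℕ => ‖a ((n + m + 1 : ℕ) : ℤ)‖ := by
    have h1 : Summable fun n : ℤ => ‖a n‖ := hs.norm
    have h2 := h1.comp_injective (i := fun n : ℕ => ((n + m + 1 : ℕ) : ℤ))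
      (fun x y hxy => by simp only at hxy; omega)
    exact h2
  have hs3 := (summable_pow_cis hs' θ).hasSum
  have h4 := (Complex.hasSum_re (hs3.mul_left (cis θ ^ (m + 1)))).mul_left 2
  have h5 := (hasSum_nat_add_iff' (f := fun n : ℕ => 2 * (a n * cis θ ^ n).re) (m + 1)).2 h2
  have h6 : ∑ i ∈ Finset.range (m + 1), 2 * (a (i : ℤ) * cis θ ^ i).re = 2 * (a 0).re := by
    rw [Finset.sum_range_succ']
    rw [Finset.sum_eq_zero]
    · simp
    · intro i hi
      rw [hgap (i + 1) (by omega) (by simpa using hi)]; simp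
  rw [h6] at h5
  have h7 := h4.unique (by
    convert! h5 using 1
    ext n
    congr 2
    rw [show n + (m + 1) = n + m + 1 by ring, show n + m + 1 = (m + 1) + n by ring, pow_add]
    ring)
  linarith

/-- A smooth periodic function without the frequencies `1, …, m` is, up to a constant, twice the
real part of a boundary function `z^(m+1) β(z)`; its derivative is then minus twice
the imaginary part of a function of the same form. -/
lemma exists_projection {g : ℝ → ℝ} (hg : ContDiff ℝ (⊤ : ℕ∞) g)
    (hp : Function.Periodic g (2 * π)) (m : ℕ)
    (horth : ∀ k : ℕ, 1 ≤ k → k ≤ m →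
      ∫ θ in (0 : ℝ)..(2 * π), (g θ : ℂ) * cis θ ^ k = 0) :
    ∃ (a : ℝ) (β γ : ℂ → ℂ), DiskHol β ∧ DiskHol γ ∧
      (∀ θ, g θ = a + 2 * (cis θ ^ (m + 1) * β (cis θ)).re) ∧
      (∀ θ, deriv g θ = -(2 * (cis θ ^ (m + 1) * γ (cis θ)).im)) := by
  have hper : ∀ f : ℝ → ℝ, Function.Periodic f (2 * π) → Function.Periodic (deriv f) (2 * π) := by
    intro f hf t
    have : (fun x => f (x + 2 * π)) = f := funext hf
    rw [← deriv_comp_add_const, this]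
  have hsm : ∀ j, ContDiff ℝ (⊤ : ℕ∞) (deriv^[j] g) := by
    intro j
    induction j with
    | zero => exact hg
    | succ j ih =>
      rw [Function.iterate_succ_apply']
      exact (contDiff_infty_iff_deriv.1 ih).2
  have hpj : ∀ j, Function.Periodic (deriv^[j] g) (2 * π) := by
    intro j
    induction j with
    | zero => exact hp
    | succ j ih => rw [Function.iterate_succ_apply']; exact hper _ ih
  have hco : ∀ j (n : ℤ), fcoef (fun θ => ((deriv^[j + 1] g θ : ℝ) : ℂ)) n
      = Complex.I * n * fcoef (fun θ => ((deriv^[j] g θ : ℝ) : ℂ)) n := by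
    intro j n
    apply fcoef_deriv
    · intro θ
      rw [Function.iterate_succ_apply']
      exact (((hsm j).differentiable (by simp)) θ).hasDerivAt.ofReal_comp
    · exact Complex.continuous_ofReal.comp (hsm (j + 1)).continuous
    · intro θ; simp only [hpj j θ]
  have hbound : ∀ f : ℝ → ℝ, Continuous f → Function.Periodic f (2 * π) → ∃ C, ∀ θ, ‖(f θ : ℂ)‖ ≤ C := by
    intro f hf hfp
    obtain ⟨C, hC⟩ := (isCompact_Icc (a := (0 : ℝ)) (b := 2 * π)).exists_bound_of_continuousOn
      hf.continuousOn
    refine ⟨C, fun θ => ?_⟩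
    obtain ⟨y, hy, hxy⟩ := hfp.exists_mem_Ico₀ (by positivity) θ
    rw [hxy, Complex.norm_real]
    exact hC y ⟨hy.1, hy.2.le⟩
  -- two integrations by parts bound the coefficients by `C / n ^ 2`
  have hsum : ∀ j, Summable (fcoef fun θ => ((deriv^[j] g θ : ℝ) : ℂ)) := by
    intro j
    obtain ⟨C, hC⟩ := hbound _ (hsm (j + 1 + 1)).continuous (hpj (j + 1 + 1))
    have hs0 : Summable fun n : ℤ => C * (1 / (n : ℝ) ^ 2) :=
      (Real.summable_one_div_int_pow.2 (by norm_num)).mul_left C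
    refine Summable.of_norm_bounded_eventually hs0 ?_
    have hne : ∀ᶠ n : ℤ in cofinite, n ≠ 0 := (Set.finite_singleton (0 : ℤ)).eventually_cofinite_notMem
    filter_upwards [hne] with n hn
    have h1 := norm_fcoef_le hC n
    rw [hco (j + 1), hco j, ← mul_assoc, norm_mul] at h1
    have h2 : ‖Complex.I * (n : ℂ) * (Complex.I * n)‖ = (n : ℝ) ^ 2 := by
      simp [sq]
    rw [h2] at h1
    have h3 : (0 : ℝ) < (n : ℝ) ^ 2 := by positivity
    rw [mul_one_div, le_div_iff₀ h3]
    linarith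
  have hfc : ∀ k : ℕ, 1 ≤ k → k ≤ m → fcoef (fun θ => (g θ : ℂ)) k = 0 := by
    intro k h1 h2
    have := fcoef_conj g (-(k : ℤ))
    rw [neg_neg] at this
    rw [this]
    unfold fcoef
    rw [neg_neg]
    simp only [zpow_natCast, horth k h1 h2, mul_zero, map_zero]
  have hs0 := hsum 0
  have hs1 := hsum 1
  have hc0 := hco 0
  simp only [Function.iterate_zero, id_eq, zero_add, Function.iterate_one] at hs0 hs1 hc0
  have hinj : Function.Injective (fun n : ℕ => ((n + m + 1 : ℕ) : ℤ)) :=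
    fun x y hxy => by simp only at hxy; omega
  refine ⟨(fcoef (fun θ => (g θ : ℂ)) 0).re,
    fun z => ∑' n : ℕ, fcoef (fun θ => (g θ : ℂ)) ((n + m + 1 : ℕ) : ℤ) * z ^ n,
    fun z => ∑' n : ℕ, (-Complex.I * fcoef (fun θ => ((deriv g θ : ℝ) : ℂ)) ((n + m + 1 : ℕ) : ℤ)) * z ^ n,
    diskHol_tsum (hs0.norm.comp_injective hinj), diskHol_tsum ?_, ?_, ?_⟩
  · simp only [norm_mul, norm_neg, Complex.norm_I, one_mul]
    exact hs1.norm.comp_injective hinj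
  · exact eq_re_tsum hg.continuous hp hs0 m hfc
  · intro θ
    have h := eq_re_tsum (hsm 1).continuous (hpj 1) hs1 m (fun k h1 h2 => by
      have := hc0 k
      rw [hfc k h1 h2, mul_zero] at this
      exact this) θ
    simp only [Function.iterate_one] at h
    have h0 := hc0 0
    simp only [Int.cast_zero, mul_zero, zero_mul] at h0
    rw [h0] at h
    rw [h]
    simp only [mul_assoc, tsum_mul_left]
    generalize (∑' n : ℕ, fcoef (fun θ => ((deriv g θ : ℝ) : ℂ)) ((n + m + 1 : ℕ) : ℤ) * cis θ ^ n) = S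
    rw [show cis θ ^ (m + 1) * (-Complex.I * S) = -Complex.I * (cis θ ^ (m + 1) * S) by ring]
    generalize cis θ ^ (m + 1) * S = T
    simp

/-! ### The trigonometric polynomial -/

/-- The analytic part `R(z) = Σ_{k=1}^m c_k z^k` of the trigonometric polynomial `P`. -/
noncomputable def anal (m : ℕ) (c : ℕ → ℂ) (z : ℂ) : ℂ := ∑ k ∈ Finset.Icc 1 m, c k * z ^ k

/-- The trigonometric polynomial `P = 1 + Σ (c_k e^{ikθ} + c̄_k e^{-ikθ}) = 1 + 2 Re R`. -/
noncomputable def trig (m : ℕ) (c : ℕ → ℂ) (θ : ℝ) : ℝ := 1 + 2 * (anal m c (cis θ)).re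

/-- The polynomial equal to `z^m P` on the circle. -/
noncomputable def trigPoly (m : ℕ) (c : ℕ → ℂ) (z : ℂ) : ℂ :=
  z ^ m + z ^ m * anal m c z + ∑ k ∈ Finset.Icc 1 m, (starRingEnd ℂ) (c k) * z ^ (m - k)

lemma differentiable_anal (m : ℕ) (c : ℕ → ℂ) : Differentiable ℂ (anal m c) := by
  unfold anal; fun_prop

lemma differentiable_trigPoly (m : ℕ) (c : ℕ → ℂ) : Differentiable ℂ (trigPoly m c) := by
  have := differentiable_anal m c
  unfold trigPoly; fun_prop

lemma diskHol_anal (m : ℕ) (c : ℕ → ℂ) : DiskHol (anal m c) :=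
  diskHol_of_differentiable (differentiable_anal m c)

lemma diskHol_trigPoly (m : ℕ) (c : ℕ → ℂ) : DiskHol (trigPoly m c) :=
  diskHol_of_differentiable (differentiable_trigPoly m c)

lemma anal_zero (m : ℕ) (c : ℕ → ℂ) : anal m c 0 = 0 := by
  unfold anal
  refine Finset.sum_eq_zero fun k hk => ?_
  have : k ≠ 0 := by have := (Finset.mem_Icc.1 hk).1; omega
  simp [this]

lemma conj_anal_cis (m : ℕ) (c : ℕ → ℂ) (θ : ℝ) :
    (starRingEnd ℂ) (anal m c (cis θ))
      = ∑ k ∈ Finset.Icc 1 m, (starRingEnd ℂ) (c k) * (cis θ)⁻¹ ^ k := by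
  simp [anal, map_sum, conj_cis]

lemma ofReal_trig (m : ℕ) (c : ℕ → ℂ) (θ : ℝ) :
    (trig m c θ : ℂ) = 1 + anal m c (cis θ) + (starRingEnd ℂ) (anal m c (cis θ)) := by
  rw [add_assoc, Complex.add_conj]; simp [trig]

lemma trigPoly_cis (m : ℕ) (c : ℕ → ℂ) (θ : ℝ) :
    trigPoly m c (cis θ) = cis θ ^ m * trig m c θ := by
  rw [ofReal_trig, conj_anal_cis, trigPoly, mul_add, mul_add, mul_one, Finset.mul_sum]
  congr 1
  refine Finset.sum_congr rfl fun k hk => ?_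
  have hk := (Finset.mem_Icc.1 hk).2
  have h0 := cis_ne_zero θ
  rw [inv_pow, pow_sub₀ _ h0 hk]
  ring

lemma contDiff_anal_cis (m : ℕ) (c : ℕ → ℂ) {n : WithTop ℕ∞} :
    ContDiff ℝ n fun θ => anal m c (cis θ) := by
  unfold anal
  exact ContDiff.sum fun k _ => contDiff_const.mul (contDiff_cis.pow k)

lemma contDiff_trig (m : ℕ) (c : ℕ → ℂ) {n : WithTop ℕ∞} : ContDiff ℝ n (trig m c) := by
  unfold trig
  exact contDiff_const.add (contDiff_const.mul
    (Complex.reCLM.contDiff.comp (contDiff_anal_cis m c)))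

lemma periodic_trig (m : ℕ) (c : ℕ → ℂ) : Function.Periodic (trig m c) (2 * π) := fun θ => by
  simp only [trig, periodic_cis θ]

/-- `P` has mean `1`, hence is not identically `0`; being analytic, it has isolated zeros. -/
lemma eventually_trig_ne_zero (m : ℕ) (c : ℕ → ℂ) (θ : ℝ) :
    ∀ᶠ t in 𝓝[≠] θ, trig m c t ≠ 0 := by
  by_contra hcon
  have hfr : ∃ᶠ t in 𝓝[≠] θ, trig m c t = 0 := by
    simpa only [ne_eq, Filter.not_eventually, not_not] using hcon
  have han : AnalyticOnNhd ℝ (trig m c) Set.univ := by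
    intro x _
    exact (contDiff_trig m c).contDiffAt.analyticAt
  have h0 := han.eqOn_zero_of_preconnected_of_frequently_eq_zero isPreconnected_univ
    (Set.mem_univ θ) hfr
  have hre : ∀ t, (anal m c (cis t)).re = -1 / 2 := fun t => by
    have : trig m c t = 0 := h0 (Set.mem_univ t)
    unfold trig at this; linarith
  -- with `Re R = -1/2` on the circle, `R (R + 1) = -1/4 - (Im R)²` is real there
  have hF : DiskHol fun z => anal m c z * (anal m c z + 1) :=
    diskHol_of_differentiable (by have := differentiable_anal m c; fun_prop)
  have h1 := hF.eq_zero_of_im (by simp [anal_zero]) (fun t => by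
    simp only [Complex.mul_im, Complex.add_re, Complex.add_im, Complex.one_re, Complex.one_im,
      hre t]
    ring) θ
  have h2 := congrArg Complex.re h1
  simp only [Complex.mul_re, Complex.add_re, Complex.add_im, Complex.one_re, Complex.one_im,
      hre θ, Complex.zero_re] at h2
  nlinarith [sq_nonneg (anal m c (cis θ)).im]

/-- If `G` is holomorphic in the disk with `G(0) = 1` and `P G = |1 + R|²` on the circle, then
`G` is real there, so `G = 1`, and `|1 + R|² = P = 1 + 2 Re R` says `R = 0`. -/
lemma coeff_eq_zero (m : ℕ) (c : ℕ → ℂ) {G : ℂ → ℂ} (hG : DiskHol G) (hG0 : G 0 = 1)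
    (h : ∀ θ, (trig m c θ : ℂ) * G (cis θ)
      = (1 + anal m c (cis θ)) * (1 + (starRingEnd ℂ) (anal m c (cis θ)))) :
    ∀ k : ℕ, 1 ≤ k → k ≤ m → c k = 0 := by
  have him : ∀ θ, (G (cis θ)).im = 0 := by
    intro θ
    have hev : ∀ᶠ t in 𝓝[≠] θ, (G (cis t)).im = 0 := by
      filter_upwards [eventually_trig_ne_zero m c θ] with t ht
      have h1 := congrArg Complex.im (h t)
      rw [Complex.im_ofReal_mul] at h1
      have h2 : trig m c t * (G (cis t)).im = 0 := by
        rw [h1]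
        simp only [Complex.mul_im, Complex.add_re, Complex.add_im, Complex.one_re,
          Complex.one_im, Complex.conj_re, Complex.conj_im]
        ring
      exact (mul_eq_zero.1 h2).resolve_left ht
    have hcont : Continuous fun t => (G (cis t)).im := Complex.continuous_im.comp hG.continuous_cis
    have h1 : Tendsto (fun t => (G (cis t)).im) (𝓝[≠] θ) (𝓝 (G (cis θ)).im) :=
      (hcont.tendsto θ).mono_left nhdsWithin_le_nhds
    have h2 : Tendsto (fun t => (G (cis t)).im) (𝓝[≠] θ) (𝓝 0) :=
      tendsto_const_nhds.congr' (by filter_upwards [hev] with t ht using ht.symm)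
    exact tendsto_nhds_unique h1 h2
  have hG1 : DiskHol fun z => G z - 1 := hG.sub (diskHol_of_differentiable (by fun_prop))
  have hR : ∀ θ, anal m c (cis θ) = 0 := by
    intro θ
    have h1 := hG1.eq_zero_of_im (by simp [hG0]) (fun t => by simp [him t]) θ
    have h2 : G (cis θ) = 1 := by linear_combination h1
    have h3 := h θ
    rw [h2, ofReal_trig] at h3
    have h4 : anal m c (cis θ) * (starRingEnd ℂ) (anal m c (cis θ)) = 0 := by
      linear_combination -h3
    rw [Complex.mul_conj] at h4
    exact Complex.normSq_eq_zero.1 (by exact_mod_cast h4)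
  intro k hk1 hkm
  let p : Polynomial ℂ := ∑ j ∈ Finset.Icc 1 m, Polynomial.C (c j) * Polynomial.X ^ j
  have hp : p = 0 := by
    apply Polynomial.eq_zero_of_infinite_isRoot
    have hinj : Set.InjOn cis (Set.Ioo 0 1) := by
      intro x hx y hy hxy
      have h1 := congrArg Complex.re hxy
      simp only [cis, Complex.exp_ofReal_mul_I_re] at h1
      have hpi := Real.pi_gt_three
      exact Real.injOn_cos ⟨hx.1.le, by linarith [hx.2]⟩ ⟨hy.1.le, by linarith [hy.2]⟩ h1
    refine ((Set.Ioo_infinite (show (0 : ℝ) < 1 by norm_num)).image hinj).mono ?_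
    rintro _ ⟨t, -, rfl⟩
    have := hR t
    simp only [anal] at this
    show p.IsRoot (cis t)
    simp [p, Polynomial.eval_finsetSum, this]
  have := congrArg (fun q => Polynomial.coeff q k) hp
  simpa [p, Polynomial.finsetSum_coeff, Polynomial.coeff_X_pow, hk1, hkm] using this

/-! ### The boundary equation with a single alternative -/

lemma DiskHol.add' {F G : ℂ → ℂ} (hF : DiskHol F) (hG : DiskHol G) :
    DiskHol fun z => F z + G z := ⟨hF.1.add hG.1, hF.2.add hG.2⟩

lemma DiskHol.sub' {F G : ℂ → ℂ} (hF : DiskHol F) (hG : DiskHol G) :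
    DiskHol fun z => F z - G z := ⟨hF.1.sub hG.1, hF.2.sub hG.2⟩

lemma DiskHol.const_mul {F : ℂ → ℂ} (hF : DiskHol F) (a : ℂ) :
    DiskHol fun z => a * F z :=
  (diskHol_of_differentiable (differentiable_const a)).mul hF

lemma diskHol_id : DiskHol fun z => z := diskHol_of_differentiable differentiable_id

/-- If `b = a + 2 Re B` with `B = z^{m+1} β`, and `b P = α + 2 Re w` with `w(0) = 0`, then comparing
the nonnegative Fourier modes gives `a = α` and `B P = w - α R`: the gap in the spectrum of `b`
makes `B P` holomorphic in the disk. -/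
lemma proj_identity (m : ℕ) (c : ℕ → ℂ) {a α : ℝ} {b : ℝ → ℝ} {β w : ℂ → ℂ}
    (hβ : DiskHol β) (hw : DiskHol w) (hw0 : w 0 = 0)
    (hb : ∀ θ, b θ = a + 2 * (cis θ ^ (m + 1) * β (cis θ)).re)
    (hbP : ∀ θ, b θ * trig m c θ = α + 2 * (w (cis θ)).re) :
    a = α ∧ ∀ θ, cis θ ^ (m + 1) * β (cis θ) * trig m c θ = w (cis θ) - α * anal m c (cis θ) := by
  let Ψ : ℂ → ℂ := fun z => z * β z * trigPoly m c z - w z + a * anal m c z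
  have hΨ : DiskHol Ψ :=
    (((diskHol_id.mul hβ).mul (diskHol_trigPoly m c)).sub' hw).add' ((diskHol_anal m c).const_mul a)
  have hΨ0 : Ψ 0 = 0 := by simp [Ψ, hw0, anal_zero]
  have hval : ∀ θ, Ψ (cis θ) = cis θ ^ (m + 1) * β (cis θ) * trig m c θ - w (cis θ)
      + a * anal m c (cis θ) := fun θ => by
    simp only [Ψ, trigPoly_cis]; ring
  have hre : ∀ θ, (Ψ (cis θ)).re = (α - a) / 2 := by
    intro θ
    have h1 := hbP θ
    rw [hb θ] at h1
    rw [hval, Complex.add_re, Complex.sub_re, Complex.re_mul_ofReal, Complex.re_ofReal_mul]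
    have h2 : trig m c θ = 1 + 2 * (anal m c (cis θ)).re := rfl
    have h3 : (a : ℝ) * trig m c θ = a + 2 * (a * (anal m c (cis θ)).re) := by rw [h2]; ring
    linarith
  have haα : a = α := by
    have h1 := hΨ.integral_eq
    rw [hΨ0, mul_zero] at h1
    have h2 := congrArg Complex.re h1
    have h3 : (∫ θ in (0 : ℝ)..(2 * π), Ψ (cis θ)).re = ∫ θ in (0 : ℝ)..(2 * π), (Ψ (cis θ)).re :=
      (Complex.reCLM.intervalIntegral_comp_comm
        (hΨ.continuous_cis.intervalIntegrable _ _)).symm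
    rw [h3] at h2
    simp only [hre, intervalIntegral.integral_const, smul_eq_mul, Complex.zero_re, sub_zero] at h2
    have h4 := (mul_eq_zero.1 h2).resolve_left (by positivity)
    linarith
  refine ⟨haα, fun θ => ?_⟩
  have h1 := (hΨ.const_mul Complex.I).eq_zero_of_im (by simp [hΨ0])
    (fun t => by rw [Complex.I_mul_im, hre, haα]; simp) θ
  have h2 := (mul_eq_zero.1 h1).resolve_left Complex.I_ne_zero
  rw [hval, haα] at h2
  linear_combination h2

/-- The case in which the boundary equation reads `b P = α`. -/
lemma case_const (m : ℕ) (c : ℕ → ℂ) {a α : ℝ} (hα : 0 < α) {b : ℝ → ℝ} {β : ℂ → ℂ}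
    (hβ : DiskHol β) (hb : ∀ θ, b θ = a + 2 * (cis θ ^ (m + 1) * β (cis θ)).re)
    (hbP : ∀ θ, b θ * trig m c θ = α) : ∀ k : ℕ, 1 ≤ k → k ≤ m → c k = 0 := by
  obtain ⟨-, hK⟩ := proj_identity m c (α := α) (w := fun _ => 0) hβ
    (diskHol_of_differentiable (by fun_prop)) rfl hb (fun θ => by simp [hbP θ])
  have hα' : (α : ℂ) ≠ 0 := by exact_mod_cast hα.ne'
  -- `P (α + B) = α (1 + R̄)`
  refine coeff_eq_zero m c (G := fun z => (α : ℂ)⁻¹ * ((α + z ^ (m + 1) * β z) * (1 + anal m c z)))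
    (DiskHol.const_mul (DiskHol.mul ((diskHol_of_differentiable (by fun_prop)).add'
      (DiskHol.mul (diskHol_of_differentiable (by fun_prop)) hβ))
      ((diskHol_of_differentiable (by fun_prop)).add' (diskHol_anal m c))) _) ?_ ?_
  · simp [anal_zero, hα']
  · intro θ
    have h1 := hK θ
    have h2 := ofReal_trig m c θ
    have h3 : (trig m c θ : ℂ) * (α + cis θ ^ (m + 1) * β (cis θ))
        = α * (1 + (starRingEnd ℂ) (anal m c (cis θ))) := by
      linear_combination h1 + α * h2
    calc _ = (α : ℂ)⁻¹ * ((trig m c θ : ℂ) * (α + cis θ ^ (m + 1) * β (cis θ)))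
          * (1 + anal m c (cis θ)) := by ring
      _ = _ := by rw [h3]; field_simp

/-- The case in which the boundary equation reads `b P = α + ∂v/∂ν = α + 2 Re w`, with
`∂_θ b = b ∂_θ v = -2 b Im w`. -/
lemma case_normal (m : ℕ) (c : ℕ → ℂ) {a α : ℝ} (hα : 0 < α) {b : ℝ → ℝ} {β γ w : ℂ → ℂ}
    (hβ : DiskHol β) (hγ : DiskHol γ) (hw : DiskHol w) (hw0 : w 0 = 0)
    (hb : ∀ θ, b θ = a + 2 * (cis θ ^ (m + 1) * β (cis θ)).re)
    (hb' : ∀ θ, deriv b θ = -(2 * (cis θ ^ (m + 1) * γ (cis θ)).im))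
    (hbw : ∀ θ, deriv b θ = b θ * (-(2 * (w (cis θ)).im)))
    (hbP : ∀ θ, b θ * trig m c θ = α + 2 * (w (cis θ)).re) :
    ∀ k : ℕ, 1 ≤ k → k ≤ m → c k = 0 := by
  obtain ⟨-, hK⟩ := proj_identity m c hβ hw hw0 hb hbP
  have hα' : (α : ℂ) ≠ 0 := by exact_mod_cast hα.ne'
  -- multiplying `∂_θ b = b ∂_θ v` by `P` gives `Im (z^{m+1} γ P) = Im (w² + α w)`
  have hδ : ∀ θ, cis θ ^ (m + 1) * γ (cis θ) * trig m c θ = w (cis θ) ^ 2 + α * w (cis θ) := by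
    intro θ
    have hΨ : DiskHol fun z => z * γ z * trigPoly m c z - (w z ^ 2 + α * w z) :=
      ((diskHol_id.mul hγ).mul (diskHol_trigPoly m c)).sub' ((hw.pow 2).add' (hw.const_mul α))
    have hval : ∀ t, cis t * γ (cis t) * trigPoly m c (cis t)
        = cis t ^ (m + 1) * γ (cis t) * trig m c t := fun t => by rw [trigPoly_cis]; ring
    have h1 := hΨ.eq_zero_of_im (by simp [hw0]) (fun t => by
      rw [hval, Complex.sub_im, Complex.im_mul_ofReal, Complex.add_im, Complex.im_ofReal_mul,
        sq, Complex.mul_im (w (cis t))]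
      have e1 : (cis t ^ (m + 1) * γ (cis t)).im = b t * (w (cis t)).im := by
        have := (hb' t).symm.trans (hbw t); linarith
      rw [e1]
      linear_combination (w (cis t)).im * hbP t) θ
    rw [hval] at h1
    linear_combination h1
  -- `w = B P + α R` turns `z^{m+1} γ P = w² + α w` into a factorisation of `α² (R² + R)` by `P`;
  -- subtracting from `(1 + R) P` factors `P` out of `|1 + R|² = (1 + R) (P - R)`
  refine coeff_eq_zero m c (G := fun z => (1 + anal m c z)
      + (α : ℂ)⁻¹ * (z ^ (m + 1) * β z * (1 + 2 * anal m c z))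
      + (α : ℂ)⁻¹ ^ 2 * (z * β z * trigPoly m c z * (z ^ (m + 1) * β z) - z ^ (m + 1) * γ z))
    ?_ ?_ ?_
  · have hp : DiskHol fun z : ℂ => z ^ (m + 1) := diskHol_of_differentiable (by fun_prop)
    have h1 : DiskHol fun z : ℂ => (1 : ℂ) := diskHol_of_differentiable (by fun_prop)
    have hB := hp.mul hβ
    exact ((h1.add' (diskHol_anal m c)).add'
      ((hB.mul (h1.add' ((diskHol_anal m c).const_mul 2))).const_mul _)).add'
      (((((diskHol_id.mul hβ).mul (diskHol_trigPoly m c)).mul hB).sub' (hp.mul hγ)).const_mul _)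
  · simp [anal_zero]
  · intro θ
    have h1 := hK θ
    have h2 := ofReal_trig m c θ
    have h3 := hδ θ
    have hw' : w (cis θ) = cis θ ^ (m + 1) * β (cis θ) * trig m c θ + α * anal m c (cis θ) := by
      linear_combination -h1
    rw [hw'] at h3
    rw [trigPoly_cis]
    have h4 : (cis θ * β (cis θ) * (cis θ ^ m * (trig m c θ : ℂ)))
      = cis θ ^ (m + 1) * β (cis θ) * trig m c θ := by ring
    rw [h4]
    generalize cis θ ^ (m + 1) * β (cis θ) = B at *
    generalize cis θ ^ (m + 1) * γ (cis θ) = Δ at *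
    generalize anal m c (cis θ) = R at *
    field_simp
    linear_combination (1 + R) * α ^ 2 * h2 - h3

/-! ### Concentration of singular weights -/

/-- The density `-M² (a ω)'`, where `ω(t) = cos(t/2) / sin(t/2)^{2k+1}` and the argument `a'` stands
for the derivative of `a`. At `t = 0` the division by zero gives the value `0`. -/
noncomputable def dens (M a a' : ℝ → ℝ) (k : ℕ) (t : ℝ) : ℝ :=
  M t ^ 2 * ((a t / 2 * (sin (t / 2) ^ 2 + (2 * k + 1) * cos (t / 2) ^ 2)
    - a' t * cos (t / 2) * sin (t / 2)) / sin (t / 2) ^ (2 * k + 2))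

lemma exists_growth {r κ D : ℝ} (hr : 1 < r) (hκ : 0 < κ) (k₀ : ℕ) :
    ∃ k ≥ k₀, D * (2 * k + 1) < κ * r ^ k := by
  have h1 : Tendsto (fun k : ℕ => (k : ℝ) ^ 1 / r ^ k) atTop (𝓝 0) :=
    tendsto_pow_const_div_const_pow_of_one_lt 1 hr
  have h0 : Tendsto (fun k : ℕ => (k : ℝ) ^ 0 / r ^ k) atTop (𝓝 0) :=
    tendsto_pow_const_div_const_pow_of_one_lt 0 hr
  have h2 : Tendsto (fun k : ℕ => D * (2 * ((k : ℝ) ^ 1 / r ^ k) + (k : ℝ) ^ 0 / r ^ k)) atTop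
      (𝓝 (D * (2 * 0 + 0))) := ((h1.const_mul 2).add h0).const_mul D
  have h3 : ∀ᶠ k : ℕ in atTop,
      D * (2 * ((k : ℝ) ^ 1 / r ^ k) + (k : ℝ) ^ 0 / r ^ k) < κ :=
    h2.eventually_lt_const (by simpa using hκ)
  obtain ⟨k, hk, hk'⟩ := (h3.and (eventually_ge_atTop k₀)).exists
  refine ⟨k, hk', ?_⟩
  have hpos : 0 < r ^ k := by positivity
  have := mul_lt_mul_of_pos_right hk hpos
  have e : D * (2 * ((k : ℝ) ^ 1 / r ^ k) + (k : ℝ) ^ 0 / r ^ k) * r ^ k = D * (2 * k + 1) := by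
    field_simp
  linarith

lemma abs_sin_half_lt {t u : ℝ} (hu : u ≤ π) (h : |t| < u) :
    |sin (t / 2)| < sin (u / 2) := by
  have hb := abs_lt.1 h
  rw [abs_lt, ← Real.sin_neg]
  constructor
  · exact Real.sin_lt_sin_of_lt_of_le_pi_div_two (by linarith) (by linarith) (by linarith)
  · exact Real.sin_lt_sin_of_lt_of_le_pi_div_two (by linarith) (by linarith) (by linarith)

lemma abs_sin_half_ge {t u : ℝ} (hu0 : 0 ≤ u) (ht : |t| ≤ π) (h : u ≤ |t|) :
    sin (u / 2) ≤ |sin (t / 2)| := by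
  have h1 : |sin (t / 2)| = sin (|t| / 2) := by
    rcases abs_cases t with ⟨e, h0⟩ | ⟨e, h0⟩
    · rw [e]; rw [e] at ht
      exact abs_of_nonneg (Real.sin_nonneg_of_nonneg_of_le_pi (by linarith) (by linarith))
    · rw [e, neg_div, Real.sin_neg]; rw [e] at ht
      exact abs_of_nonpos (Real.sin_nonpos_of_nonpos_of_neg_pi_le (by linarith) (by linarith))
  rw [h1]
  exact Real.sin_le_sin_of_le_of_le_pi_div_two (by linarith) (by linarith) (by linarith)

set_option maxHeartbeats 1000000 in
/-- If `a(0) > 0`, the weight concentrates at `t = 0` with a positive sign as `k → ∞`, so the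
vanishing of all the weighted integrals forces `M = 0` near `0`. -/
lemma eventually_zero_of_dens {M a a' : ℝ → ℝ} (hM : Continuous M) (hM0 : M 0 = 0)
    (ha : Continuous a) (ha' : Continuous a') (ha0 : 0 < a 0) (k₀ : ℕ)
    (hint : ∀ k ≥ k₀, IntervalIntegrable (dens M a a' k) volume (-π) π)
    (hzero : ∀ k ≥ k₀, ∫ t in (-π)..π, dens M a a' k t = 0) :
    ∀ᶠ t in 𝓝 (0 : ℝ), M t = 0 := by
  have hpi := Real.pi_gt_three
  -- bounds on `[-π, π]`
  have hbd : ∀ f : ℝ → ℝ, Continuous f → ∃ C, 0 < C ∧ ∀ t, |t| ≤ π → |f t| ≤ C := by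
    intro f hf
    obtain ⟨C, hC⟩ := (isCompact_Icc (a := -π) (b := π)).exists_bound_of_continuousOn hf.continuousOn
    exact ⟨max C 1, by positivity, fun t ht => (hC t (abs_le.1 ht)).trans (le_max_left _ _)⟩
  obtain ⟨B, hB0, hB⟩ := hbd M hM
  obtain ⟨A, hA0, hA⟩ := hbd a ha
  obtain ⟨A', hA'0, hA'⟩ := hbd a' ha'
  set a₀ := a 0 / 2 with ha₀
  have ha₀pos : 0 < a₀ := by positivity
  obtain ⟨ρ', hρ'0, hρ'⟩ := Metric.eventually_nhds_iff.1
    ((ha.tendsto 0).eventually_const_lt (show a₀ < a 0 by linarith))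
  set ρ := min ρ' 1 with hρ
  have hρ0 : 0 < ρ := by positivity
  have hρ1 : ρ ≤ 1 := min_le_right _ _
  have hnear : ∀ t, |t| < ρ → a₀ < a t := fun t ht =>
    hρ' (by rw [Real.dist_eq, sub_zero]; exact ht.trans_le (min_le_left _ _))
  obtain ⟨k₁, hk₁⟩ := exists_nat_gt (A' ^ 2 / a₀ ^ 2)
  set σ := sin (ρ / 2) with hσ
  have hσ0 : 0 < σ := Real.sin_pos_of_pos_of_lt_pi (by linarith) (by linarith)
  set D := B ^ 2 * (A + A') / σ ^ 2 with hD
  -- lower bound near `0`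
  have hlow : ∀ k ≥ k₁, ∀ t, |t| < ρ →
      M t ^ 2 * (a₀ / 4 * ((sin (t / 2) ^ 2)⁻¹) ^ k) ≤ dens M a a' k t := by
    intro k hk t ht
    unfold dens
    by_cases ht0 : t = 0
    · simp [ht0, hM0]
    have htp : |t| ≤ π := by linarith
    have hs : sin (t / 2) ≠ 0 := by
      have h1 := abs_sin_half_ge (u := |t|) (abs_nonneg t) htp le_rfl
      have h2 : 0 < sin (|t| / 2) := Real.sin_pos_of_pos_of_lt_pi
        (by have := abs_pos.2 ht0; linarith) (by linarith)
      exact abs_pos.1 (h2.trans_le h1)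
    apply mul_le_mul_of_nonneg_left _ (sq_nonneg _)
    have h1 : a₀ / 4 * sin (t / 2) ^ 2 ≤
        a t / 2 * (sin (t / 2) ^ 2 + (2 * k + 1) * cos (t / 2) ^ 2)
          - a' t * cos (t / 2) * sin (t / 2) := by
      have hat := hnear t ht
      have ha't := hA' t htp
      have hk' : A' ^ 2 ≤ a₀ ^ 2 * k := by
        have h3 : A' ^ 2 / a₀ ^ 2 ≤ k := hk₁.le.trans (by exact_mod_cast hk)
        rw [div_le_iff₀ (by positivity)] at h3
        linarith
      have h4 : a' t ^ 2 ≤ a₀ ^ 2 * k := (sq_le_sq' (by linarith [abs_le.1 ha't])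
        (abs_le.1 ha't).2).trans hk'
      generalize sin (t / 2) = s at *
      generalize cos (t / 2) = x at *
      have h5 : a₀ / 2 * (s ^ 2 + (2 * k + 1) * x ^ 2) ≤ a t / 2 * (s ^ 2 + (2 * k + 1) * x ^ 2) := by
        apply mul_le_mul_of_nonneg_right (by linarith); positivity
      have h6 : a' t * x * s ≤ a₀ / 4 * s ^ 2 + a₀ * k * x ^ 2 := by
        have h7 : 0 ≤ (a₀ * s - 2 * (a' t * x)) ^ 2 := sq_nonneg _
        have h8 : a' t ^ 2 * x ^ 2 ≤ a₀ ^ 2 * k * x ^ 2 :=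
          mul_le_mul_of_nonneg_right h4 (sq_nonneg _)
        have h9 : 0 ≤ a₀ * (a₀ / 4 * s ^ 2 + a₀ * k * x ^ 2 - a' t * x * s) := by nlinarith
        have := nonneg_of_mul_nonneg_right h9 ha₀pos
        linarith
      nlinarith [sq_nonneg x]
    have h2 : (((sin (t / 2) ^ 2)⁻¹) ^ k : ℝ) = sin (t / 2) ^ 2 / sin (t / 2) ^ (2 * k + 2) := by
      rw [inv_pow, ← pow_mul, pow_add]; field_simp
    rw [h2, ← mul_div_assoc]
    apply div_le_div_of_nonneg_right h1
    rw [show 2 * k + 2 = 2 * (k + 1) by ring, pow_mul]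
    positivity
  -- lower bound away from `0`
  have hfar : ∀ k : ℕ, ∀ t, |t| ≤ π → ρ ≤ |t| →
      -(D * (2 * k + 1) * ((σ ^ 2)⁻¹) ^ k) ≤ dens M a a' k t := by
    intro k t ht htρ
    have hs := abs_sin_half_ge hρ0.le ht htρ
    apply neg_le_of_abs_le
    unfold dens
    rw [abs_mul, abs_div, abs_of_nonneg (sq_nonneg (M t))]
    have h1 : |sin (t / 2) ^ (2 * k + 2)| ≥ σ ^ (2 * k + 2) := by
      rw [abs_pow]; exact pow_le_pow_left₀ hσ0.le hs _
    have h2 : M t ^ 2 ≤ B ^ 2 := sq_le_sq' (by linarith [abs_le.1 (hB t ht)])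
      (abs_le.1 (hB t ht)).2
    have h3 : |a t / 2 * (sin (t / 2) ^ 2 + (2 * k + 1) * cos (t / 2) ^ 2)
        - a' t * cos (t / 2) * sin (t / 2)| ≤ (A + A') * (2 * k + 1) := by
      have e1 := Real.sin_sq_add_cos_sq (t / 2)
      have hat := hA t ht
      have ha't := hA' t ht
      have hk0 : (0 : ℝ) ≤ k := Nat.cast_nonneg k
      refine (abs_sub _ _).trans ?_
      have e2 : |a t / 2 * (sin (t / 2) ^ 2 + (2 * k + 1) * cos (t / 2) ^ 2)| ≤ A * (2 * k + 1) := by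
        rw [abs_mul, abs_div]
        have : |sin (t / 2) ^ 2 + (2 * k + 1) * cos (t / 2) ^ 2| ≤ (2 * k + 1 : ℝ) := by
          rw [abs_of_nonneg (by positivity)]
          nlinarith [sq_nonneg (sin (t / 2)), sq_nonneg (cos (t / 2))]
        apply mul_le_mul _ this (abs_nonneg _) hA0.le
        rw [abs_two]; linarith
      have e3 : |a' t * cos (t / 2) * sin (t / 2)| ≤ A' * 1 * 1 := by
        rw [abs_mul, abs_mul]
        gcongr
        · exact Real.abs_cos_le_one _
        · exact Real.abs_sin_le_one _
      nlinarith
    have h4 : D * (2 * k + 1) * ((σ ^ 2)⁻¹) ^ k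
        = B ^ 2 * ((A + A') * (2 * k + 1) / σ ^ (2 * k + 2)) := by
      rw [hD, inv_pow, ← pow_mul, pow_add]; field_simp
    rw [h4]
    gcongr
  have hD0 : 0 < D := by positivity
  -- a point with `M ≠ 0` close to `0` contradicts the vanishing of the integrals
  rw [Metric.eventually_nhds_iff]
  refine ⟨ρ, hρ0, fun t₁ ht₁ => ?_⟩
  rw [Real.dist_eq, sub_zero] at ht₁
  by_contra hne
  obtain ⟨u, hu1, hu2⟩ := exists_between ht₁
  have hu0 : 0 < u := (abs_nonneg t₁).trans_lt hu1
  set q := sin (u / 2) with hq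
  have hq0 : 0 < q := Real.sin_pos_of_pos_of_lt_pi (by linarith) (by linarith)
  have hqσ : q < σ := Real.sin_lt_sin_of_lt_of_le_pi_div_two (by linarith) (by linarith)
    (by linarith)
  set ε := M t₁ ^ 2 / 2 with hε
  have hM1 : 0 < M t₁ ^ 2 := by positivity
  have hev : ∀ᶠ t in 𝓝 t₁, ε < M t ^ 2 ∧ |t| < u ∧ t ≠ 0 := by
    refine (((hM.pow 2).tendsto t₁).eventually_const_lt
      (show ε < M t₁ ^ 2 by linarith)).and ((continuous_abs.tendsto t₁).eventually_lt_const hu1 |>.and ?_)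
    exact isOpen_ne.eventually_mem (fun h => hne (h ▸ hM0))
  obtain ⟨δ', hδ'0, hδ'⟩ := Metric.eventually_nhds_iff.1 hev
  set δ := δ' / 2 with hδ
  have hδ0 : 0 < δ := by positivity
  have hJ : ∀ t ∈ Set.Icc (t₁ - δ) (t₁ + δ), ε < M t ^ 2 ∧ |t| < u ∧ t ≠ 0 := by
    intro t ht
    apply hδ'
    rw [Real.dist_eq, abs_lt]
    constructor <;> linarith [ht.1, ht.2]
  obtain ⟨k, hk, hgrow⟩ := exists_growth (r := σ ^ 2 / q ^ 2) (κ := 2 * δ * (ε * (a₀ / 4)))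
    (D := 2 * π * D)
    (by rw [one_lt_div (by positivity)]; exact pow_lt_pow_left₀ hqσ hq0.le two_ne_zero)
    (by positivity) (max k₀ k₁)
  have hkk₀ : k ≥ k₀ := (le_max_left _ _).trans hk
  have hkk₁ : k ≥ k₁ := (le_max_right _ _).trans hk
  set E := D * (2 * k + 1) * ((σ ^ 2)⁻¹) ^ k with hE
  have hE0 : 0 ≤ E := by positivity
  have hnn : ∀ t, |t| ≤ π → 0 ≤ dens M a a' k t + E := by
    intro t ht
    rcases lt_or_ge |t| ρ with h | h
    · have h1 := hlow k hkk₁ t h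
      have : 0 ≤ M t ^ 2 * (a₀ / 4 * ((sin (t / 2) ^ 2)⁻¹) ^ k) := by positivity
      linarith
    · linarith [hfar k t ht h]
  have hint' : IntervalIntegrable (fun t => dens M a a' k t + E) volume (-π) π :=
    (hint k hkk₀).add intervalIntegrable_const
  have htot : ∫ t in (-π)..π, (dens M a a' k t + E) = 2 * π * E := by
    rw [intervalIntegral.integral_add (hint k hkk₀) intervalIntegrable_const, hzero k hkk₀,
      intervalIntegral.integral_const, smul_eq_mul]
    ring
  have hl := hJ (t₁ - δ) ⟨le_rfl, by linarith⟩
  have hr := hJ (t₁ + δ) ⟨by linarith, le_rfl⟩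
  have hlπ : -π ≤ t₁ - δ := by linarith [(abs_lt.1 hl.2.1).1]
  have hrπ : t₁ + δ ≤ π := by linarith [(abs_lt.1 hr.2.1).2]
  have hmono : ∫ t in (t₁ - δ)..(t₁ + δ), (dens M a a' k t + E)
      ≤ ∫ t in (-π)..π, (dens M a a' k t + E) := by
    apply intervalIntegral.integral_mono_interval hlπ (by linarith) hrπ _ hint'
    filter_upwards [self_mem_ae_restrict measurableSet_Ioc] with t ht
    exact hnn t (abs_le.2 ⟨ht.1.le, ht.2⟩)
  have hlower : 2 * δ * (ε * (a₀ / 4 * ((q ^ 2)⁻¹) ^ k))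
      ≤ ∫ t in (t₁ - δ)..(t₁ + δ), (dens M a a' k t + E) := by
    have h1 : ∫ t in (t₁ - δ)..(t₁ + δ), (ε * (a₀ / 4 * ((q ^ 2)⁻¹) ^ k))
        ≤ ∫ t in (t₁ - δ)..(t₁ + δ), (dens M a a' k t + E) := by
      apply intervalIntegral.integral_mono_on (by linarith) intervalIntegrable_const
      · apply hint'.mono_set
        rw [Set.uIcc_of_le (by linarith), Set.uIcc_of_le (by linarith)]
        exact Set.Icc_subset_Icc hlπ hrπ
      · intro t ht
        obtain ⟨j1, j2, j3⟩ := hJ t ht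
        have h2 := hlow k hkk₁ t (j2.trans hu2)
        have h3 := abs_sin_half_lt (by linarith) j2
        have hs : 0 < |sin (t / 2)| :=
          (Real.sin_pos_of_pos_of_lt_pi (by have := abs_pos.2 j3; linarith)
            (by linarith)).trans_le
            (abs_sin_half_ge (u := |t|) (abs_nonneg t) (by linarith) le_rfl)
        have h4 : (q ^ 2)⁻¹ ≤ (sin (t / 2) ^ 2)⁻¹ := by
          apply inv_anti₀
          · rw [← sq_abs]; positivity
          · rw [← sq_abs]; exact pow_le_pow_left₀ hs.le h3.le 2
        have h5 : ε * (a₀ / 4 * ((q ^ 2)⁻¹) ^ k)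
            ≤ M t ^ 2 * (a₀ / 4 * ((sin (t / 2) ^ 2)⁻¹) ^ k) := by
          have h6 := pow_le_pow_left₀ (show 0 ≤ (q ^ 2)⁻¹ by positivity) h4 k
          exact mul_le_mul j1.le (mul_le_mul_of_nonneg_left h6 (by linarith))
            (mul_nonneg (by linarith) (pow_nonneg (inv_nonneg.2 (sq_nonneg q)) k)) (sq_nonneg _)
        linarith
    rw [intervalIntegral.integral_const, smul_eq_mul] at h1
    linarith
  have hfin := hlower.trans (hmono.trans htot.le)
  have e1 : ((q ^ 2)⁻¹) ^ k = (σ ^ 2 / q ^ 2) ^ k * ((σ ^ 2)⁻¹) ^ k := by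
    rw [← mul_pow]; congr 1; field_simp
  rw [e1, hE] at hfin
  have hpos : 0 < ((σ ^ 2)⁻¹) ^ k := by positivity
  have := mul_lt_mul_of_pos_right hgrow hpos
  linarith

/-! ### Flat functions and singular weights on the circle -/

lemma periodic_deriv {f : ℝ → ℝ} (hf : Function.Periodic f (2 * π)) :
    Function.Periodic (deriv f) (2 * π) := by
  intro t
  have : (fun x => f (x + 2 * π)) = f := funext hf
  rw [← deriv_comp_add_const, this]

lemma exists_bound_of_periodic {f : ℝ → ℝ} (hf : Continuous f) (hp : Function.Periodic f (2 * π)) :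
    ∃ C, 0 ≤ C ∧ ∀ t, |f t| ≤ C := by
  obtain ⟨C, hC⟩ := (isCompact_Icc (a := 0) (b := 2 * π)).exists_bound_of_continuousOn
    hf.continuousOn
  refine ⟨C, (norm_nonneg _).trans (hC 0 ⟨le_rfl, by positivity⟩), fun t => ?_⟩
  obtain ⟨y, hy, hxy⟩ := hp.exists_mem_Ico₀ (by positivity) t
  rw [hxy]
  exact hC y ⟨hy.1, hy.2.le⟩

lemma flat_bound_near {g : ℝ → ℝ} (hg : ContDiff ℝ (⊤ : ℕ∞) g)
    (h0 : ∀ j, iteratedDeriv j g 0 = 0) (n : ℕ) :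
    ∃ C, 0 ≤ C ∧ ∀ t, |t| ≤ π → |g t| ≤ C * |t| ^ n := by
  induction n generalizing g with
  | zero =>
    obtain ⟨C, hC⟩ := (isCompact_Icc (a := -π) (b := π)).exists_bound_of_continuousOn
      hg.continuous.continuousOn
    refine ⟨C, (norm_nonneg _).trans (hC 0 ⟨by linarith [Real.pi_pos], Real.pi_pos.le⟩),
      fun t ht => ?_⟩
    simpa using hC t (abs_le.1 ht)
  | succ n ih =>
    obtain ⟨C, hC0, hC⟩ := ih (contDiff_infty_iff_deriv.1 hg).2 (fun j => by
      rw [← iteratedDeriv_succ']; exact h0 (j + 1))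
    refine ⟨C, hC0, fun t ht => ?_⟩
    have h := (convex_Icc (-|t|) |t|).norm_image_sub_le_of_norm_deriv_le (f := g)
      (C := C * |t| ^ n) (x := 0) (y := t)
      (fun x _ => (contDiff_infty_iff_deriv.1 hg).1 x)
      (fun x hx => by
        have hx' : |x| ≤ |t| := abs_le.2 hx
        exact (hC x (hx'.trans ht)).trans (by gcongr))
      ⟨by simp, by simp⟩ ⟨neg_abs_le t, le_abs_self t⟩
    have hg0 : g 0 = 0 := by simpa using h0 0
    rw [hg0, sub_zero, sub_zero, Real.norm_eq_abs, Real.norm_eq_abs] at h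
    rw [pow_succ, ← mul_assoc]; exact h

/-- A smooth periodic function all of whose derivatives vanish at `0` is dominated by every power
of `|sin (t/2)|`. -/
lemma flat_bound {g : ℝ → ℝ} (hg : ContDiff ℝ (⊤ : ℕ∞) g) (hp : Function.Periodic g (2 * π))
    (h0 : ∀ j, iteratedDeriv j g 0 = 0) (n : ℕ) :
    ∃ C, 0 ≤ C ∧ ∀ t, |g t| ≤ C * |sin (t / 2)| ^ n := by
  obtain ⟨C, hC0, hC⟩ := flat_bound_near hg h0 n
  refine ⟨C * π ^ n, by positivity, fun t => ?_⟩
  have hp2 : Function.Periodic (fun t => (g t, |sin (t / 2)|)) (2 * π) := fun x => by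
    have : sin ((x + 2 * π) / 2) = -sin (x / 2) := by
      rw [show (x + 2 * π) / 2 = x / 2 + π by ring, Real.sin_add_pi]
    simp only [hp x, this, abs_neg]
  obtain ⟨y, hy, hxy⟩ := hp2.exists_mem_Ico (by positivity) t (-π)
  simp only [Prod.mk.injEq] at hxy
  rw [hxy.1, hxy.2]
  have hy' : |y| ≤ π := abs_le.2 ⟨hy.1, by linarith [hy.2]⟩
  have h1 := Real.mul_abs_le_abs_sin (x := y / 2) (by rw [abs_div, abs_two]; linarith)
  have h2 : |y| ≤ π * |sin (y / 2)| := by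
    rw [abs_div, abs_two] at h1
    have h3 : π * (2 / π * (|y| / 2)) = |y| := by field_simp
    calc |y| = π * (2 / π * (|y| / 2)) := h3.symm
      _ ≤ _ := by gcongr
  calc |g y| ≤ C * |y| ^ n := hC y hy'
    _ ≤ C * (π * |sin (y / 2)|) ^ n := by gcongr
    _ = _ := by rw [mul_pow]; ring

lemma intervalIntegrable_of_bdd {E : Type*} [NormedAddCommGroup E] {f : ℝ → E} {C a b : ℝ}
    (hm : AEStronglyMeasurable f volume) (hC : ∀ t, ‖f t‖ ≤ C) : IntervalIntegrable f volume a b :=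
  (intervalIntegrable_const (c := C)).mono_fun hm.restrict
    (Eventually.of_forall fun t => (hC t).trans (le_abs_self C))

/-- The mean value property survives division by a power of `z - 1` that `F` absorbs: move the
pole to `R > 1` and let `R ↓ 1`. -/
lemma integral_div_pow {F : ℂ → ℂ} (hF : DiskHol F) (hF0 : F 0 = 0) {n : ℕ} (hn : n ≠ 0) {C : ℝ}
    (hC : ∀ t, ‖F (cis t)‖ ≤ C * ‖cis t - 1‖ ^ n) :
    IntervalIntegrable (fun t => F (cis t) / (cis t - 1) ^ n) volume (-π) π ∧
      ∫ t in (-π)..π, F (cis t) / (cis t - 1) ^ n = 0 := by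
  have hC0 : 0 ≤ C := by
    have h1 := (norm_nonneg _).trans (hC π)
    have h2 : cis π = -1 := by simp [cis_eq]
    rw [h2] at h1
    by_contra h
    have h3 : 0 < ‖(-1 - 1 : ℂ)‖ ^ n := by
      have : (-1 - 1 : ℂ) ≠ 0 := by norm_num
      positivity
    nlinarith
  have hmeas : ∀ R : ℝ, AEStronglyMeasurable (fun t => F (cis t) / (cis t - R) ^ n) volume := by
    intro R
    have h1 : Measurable fun t => F (cis t) := hF.continuous_cis.measurable
    have h2 : Measurable fun t => (cis t - (R : ℂ)) ^ n :=
      ((continuous_cis.sub continuous_const).pow n).measurable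
    exact (h1.div h2).aestronglyMeasurable
  have hge : ∀ R : ℝ, 1 ≤ R → ∀ t, ‖cis t - 1‖ ≤ ‖cis t - R‖ := by
    intro R hR t
    have h1 : ‖cis t - 1‖ ^ 2 ≤ ‖cis t - R‖ ^ 2 := by
      rw [← Complex.normSq_eq_norm_sq, ← Complex.normSq_eq_norm_sq, Complex.normSq_apply,
        Complex.normSq_apply, cis_eq]
      simp only [Complex.sub_re, Complex.sub_im, Complex.add_re, Complex.add_im, Complex.ofReal_re,
        Complex.ofReal_im, Complex.re_ofReal_mul, Complex.im_ofReal_mul, Complex.I_re, Complex.I_im,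
        Complex.one_re, Complex.one_im]
      nlinarith [Real.cos_le_one t]
    exact le_of_sq_le_sq h1 (norm_nonneg _)
  have hbd : ∀ R : ℝ, 1 ≤ R → ∀ t, ‖F (cis t) / (cis t - R) ^ n‖ ≤ C := by
    intro R hR t
    rw [norm_div, norm_pow]
    refine div_le_of_le_mul₀ (by positivity) hC0 ((hC t).trans ?_)
    have := hge R hR t
    gcongr
  have hint := intervalIntegrable_of_bdd (a := -π) (b := π) (hmeas 1) (hbd 1 le_rfl)
  rw [Complex.ofReal_one] at hint
  refine ⟨hint, ?_⟩
  have hzero : ∀ R : ℝ, 1 < R → ∫ t in (-π)..π, F (cis t) / (cis t - R) ^ n = 0 := by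
    intro R hR
    have hG : DiskHol fun z => F z * ((z - R) ^ n)⁻¹ := by
      apply hF.mul
      apply DiskHol.of
      · intro z hz
        have : z - R ≠ 0 := by
          intro h
          have h1 : ‖z‖ < 1 := by simpa using hz
          rw [sub_eq_zero.1 h, Complex.norm_real, Real.norm_of_nonneg (by linarith)] at h1
          linarith
        have h2 : (z - R) ^ n ≠ 0 := pow_ne_zero _ this
        exact (DifferentiableAt.fun_inv (h := fun z : ℂ => (z - R) ^ n) (by fun_prop) h2).differentiableWithinAt
      · intro z hz
        have : z - R ≠ 0 := by
          intro h
          have h1 : ‖z‖ ≤ 1 := by simpa using hz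
          rw [sub_eq_zero.1 h, Complex.norm_real, Real.norm_of_nonneg (by linarith)] at h1
          linarith
        have h2 : (z - R) ^ n ≠ 0 := pow_ne_zero _ this
        exact (ContinuousAt.inv₀ (f := fun z : ℂ => (z - R) ^ n) (by fun_prop) h2).continuousWithinAt
    have h1 := hG.integral_eq
    simp only [hF0, zero_mul, mul_zero] at h1
    have hper : Function.Periodic (fun t => F (cis t) * ((cis t - R) ^ n)⁻¹) (2 * π) := fun t => by
      simp only [periodic_cis t]
    have h2 := hper.intervalIntegral_add_eq (-π) 0
    rw [show -π + 2 * π = π by ring, zero_add, h1] at h2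
    simpa only [div_eq_mul_inv] using h2
  have hlim : Tendsto (fun R : ℝ => ∫ t in (-π)..π, F (cis t) / (cis t - R) ^ n) (𝓝[>] 1)
      (𝓝 (∫ t in (-π)..π, F (cis t) / (cis t - 1) ^ n)) := by
    apply intervalIntegral.tendsto_integral_filter_of_dominated_convergence (fun _ => C)
    · exact Eventually.of_forall fun R => (hmeas R).restrict
    · filter_upwards [self_mem_nhdsWithin] with R hR
      exact Eventually.of_forall fun t _ => hbd R (le_of_lt hR) t
    · exact intervalIntegrable_const
    · refine Eventually.of_forall fun t _ => ?_
      by_cases ht : cis t - 1 = 0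
      · have h1 : F (cis t) = 0 := by
          have := hC t
          rw [ht, norm_zero, zero_pow hn, mul_zero] at this
          exact norm_le_zero_iff.1 this
        simp only [h1, zero_div]
        exact tendsto_const_nhds
      · refine Tendsto.mono_left ?_ nhdsWithin_le_nhds
        have hc : ContinuousAt (fun R : ℝ => F (cis t) / (cis t - (R : ℂ)) ^ n) 1 := by
          apply ContinuousAt.div continuousAt_const (by fun_prop)
          rw [Complex.ofReal_one]
          exact pow_ne_zero _ ht
        have := hc.tendsto
        rwa [Complex.ofReal_one] at this
  exact tendsto_nhds_unique hlim (tendsto_const_nhds.congr' (by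
    filter_upwards [self_mem_nhdsWithin] with R hR using (hzero R hR).symm))

lemma cis_half (t : ℝ) : cis t = cis (t / 2) ^ 2 := by
  rw [sq, ← cis_add]; ring_nf

lemma cis_sub_one (t : ℝ) : cis t - 1 = 2 * Complex.I * sin (t / 2) * cis (t / 2) := by
  have h : (Real.sin (t / 2) : ℂ) ^ 2 + (Real.cos (t / 2) : ℂ) ^ 2 = 1 := by
    exact_mod_cast Real.sin_sq_add_cos_sq (t / 2)
  rw [cis_half t, cis_eq (t / 2)]
  linear_combination h - (Real.sin (t / 2) : ℂ) ^ 2 * Complex.I_sq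

lemma cis_add_one (t : ℝ) : cis t + 1 = 2 * cos (t / 2) * cis (t / 2) := by
  have h : (Real.sin (t / 2) : ℂ) ^ 2 + (Real.cos (t / 2) : ℂ) ^ 2 = 1 := by
    exact_mod_cast Real.sin_sq_add_cos_sq (t / 2)
  rw [cis_half t, cis_eq (t / 2)]
  linear_combination -h + (Real.sin (t / 2) : ℂ) ^ 2 * Complex.I_sq

lemma norm_cis_sub_one (t : ℝ) : ‖cis t - 1‖ = 2 * |sin (t / 2)| := by
  rw [cis_sub_one]
  simp only [norm_mul, Complex.norm_I, norm_cis, Complex.norm_real, Real.norm_eq_abs,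
    Complex.norm_ofNat, mul_one]

/-- The weight `cos(t/2) / sin(t/2)^{2k+1}` in terms of `z = e^{it}`. -/
lemma weight_eq (k : ℕ) (t : ℝ) (y : ℂ) :
    4 ^ k * (Complex.I * (cis t + 1) * (-1) ^ k * cis t ^ k * y) / (cis t - 1) ^ (2 * k + 1)
      = (cos (t / 2) / sin (t / 2) ^ (2 * k + 1) : ℝ) * y := by
  rw [cis_add_one, cis_sub_one, cis_half t]
  have hc := cis_ne_zero (t / 2)
  set h := cis (t / 2)
  have hX : (4 : ℂ) ^ k * (2 * Complex.I) * (-1) ^ k * h ^ (2 * k + 1) ≠ 0 := by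
    have := Complex.I_ne_zero
    simp [this, hc]
  have e1 : (4 : ℂ) ^ k * (Complex.I * (2 * (cos (t / 2) : ℂ) * h) * (-1) ^ k * (h ^ 2) ^ k * y)
      = (4 ^ k * (2 * Complex.I) * (-1) ^ k * h ^ (2 * k + 1)) * (cos (t / 2) * y) := by
    rw [← pow_mul, pow_succ]; ring
  have e2 : (2 * Complex.I * (sin (t / 2) : ℂ) * h) ^ (2 * k + 1)
      = (4 ^ k * (2 * Complex.I) * (-1) ^ k * h ^ (2 * k + 1)) * (sin (t / 2) : ℂ) ^ (2 * k + 1) := by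
    rw [mul_pow, mul_pow, mul_pow, pow_succ 2, pow_succ Complex.I, pow_mul 2, pow_mul Complex.I,
      Complex.I_sq]
    norm_num
    ring
  rw [e1, e2, mul_div_mul_left _ _ hX]
  push_cast
  ring

/-! ### The bilinear identity -/

/-- The function `2 P w - i ∂_θ P`, multiplied by `z^m` to become holomorphic in the disk. -/
noncomputable def quadY (m : ℕ) (c : ℕ → ℂ) (w : ℂ → ℂ) (z : ℂ) : ℂ :=
  2 * trigPoly m c z * w z + (z * deriv (trigPoly m c) z - m * trigPoly m c z)

lemma diskHol_quadY (m : ℕ) (c : ℕ → ℂ) {w : ℂ → ℂ} (hw : DiskHol w) :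
    DiskHol (quadY m c w) := by
  have h1 := differentiable_trigPoly m c
  have h2 : Differentiable ℂ (deriv (trigPoly m c)) := by
    have : ContDiff ℂ 2 (trigPoly m c) := h1.contDiff
    exact (this.differentiable_deriv_two)
  exact (((diskHol_trigPoly m c).const_mul 2).mul hw).add'
    (diskHol_of_differentiable (by fun_prop))

lemma quadY_cis (m : ℕ) (c : ℕ → ℂ) (w : ℂ → ℂ) (θ : ℝ) :
    quadY m c w (cis θ) = cis θ ^ m *
      (2 * trig m c θ * w (cis θ) - Complex.I * (deriv (trig m c) θ : ℝ)) := by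
  have h1 : HasDerivAt (fun t => trigPoly m c (cis t))
      (deriv (trigPoly m c) (cis θ) * (Complex.I * cis θ)) θ :=
    (differentiable_trigPoly m c (cis θ)).hasDerivAt.comp θ (hasDerivAt_cis θ)
  have h2 : HasDerivAt (fun t => cis t ^ m * (trig m c t : ℂ))
      ((m : ℂ) * cis θ ^ (m - 1) * (Complex.I * cis θ) * trig m c θ
        + cis θ ^ m * (deriv (trig m c) θ : ℝ)) θ := by
    have h3 : HasDerivAt (trig m c) (deriv (trig m c) θ) θ :=
      ((contDiff_trig m c (n := 1)).differentiable one_ne_zero θ).hasDerivAt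
    exact ((hasDerivAt_cis θ).fun_pow m).mul h3.ofReal_comp
  have h3 : (fun t => trigPoly m c (cis t)) = fun t => cis t ^ m * (trig m c t : ℂ) :=
    funext (trigPoly_cis m c)
  rw [h3] at h1
  have h4 := h1.unique h2
  have h5 : (m : ℂ) * cis θ ^ (m - 1) * (Complex.I * cis θ) = Complex.I * (m * cis θ ^ m) := by
    rcases Nat.eq_zero_or_pos m with h | h
    · simp [h]
    · conv_rhs => rw [show m = m - 1 + 1 by omega, pow_succ]
      rw [show m - 1 + 1 = m by omega]
      ring
  rw [h5] at h4
  rw [quadY, trigPoly_cis]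
  linear_combination (-Complex.I) * h4
    + (deriv (trigPoly m c) (cis θ) * cis θ - m * cis θ ^ m * trig m c θ) * Complex.I_sq

/-- The bilinear identity: `Im ((2 P w - i ∂_θ P)²) = -2 (P / b) M ∂_θ M` is orthogonal to the
singular weight `cos(t/2) / sin(t/2)^{2k+1}`, by holomorphy. -/
lemma integral_weight (m : ℕ) (c : ℕ → ℂ) {α : ℝ} {w : ℂ → ℂ} {b N M : ℝ → ℝ}
    (hw : DiskHol w) (hb : ContDiff ℝ (⊤ : ℕ∞) b) (hbp : Function.Periodic b (2 * π))
    (hb0 : ∀ θ, 0 < b θ) (hbw : ∀ θ, deriv b θ = b θ * (-(2 * (w (cis θ)).im)))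
    (hN : ContDiff ℝ (⊤ : ℕ∞) N) (hNw : ∀ θ, N θ = 2 * (w (cis θ)).re)
    (hM : ∀ θ, M θ = b θ * trig m c θ - α) (hMN : ∀ θ, deriv M θ * (M θ - N θ) = 0)
    (hMf : ∀ j, iteratedDeriv j M 0 = 0) (hNf : ∀ j, iteratedDeriv j N 0 = 0)
    (k : ℕ) (hk : 2 * m + 1 ≤ k) :
    IntervalIntegrable (fun t => M t * deriv M t * (trig m c t / b t)
        * (cos (t / 2) / sin (t / 2) ^ (2 * k + 1))) volume (-π) π ∧
      ∫ t in (-π)..π, M t * deriv M t * (trig m c t / b t)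
        * (cos (t / 2) / sin (t / 2) ^ (2 * k + 1)) = 0 := by
  have hPs : ContDiff ℝ (⊤ : ℕ∞) (trig m c) := contDiff_trig m c
  have hMs : ContDiff ℝ (⊤ : ℕ∞) M := by
    rw [funext hM]; exact (hb.mul hPs).sub contDiff_const
  have hMp : Function.Periodic M (2 * π) := fun t => by
    rw [hM, hM, hbp, periodic_trig]
  have hNp : Function.Periodic N (2 * π) := fun t => by rw [hNw, hNw, periodic_cis]
  have hM' : ∀ t, deriv M t = deriv b t * trig m c t + b t * deriv (trig m c) t := by
    intro t
    rw [funext hM]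
    have h1 := (hb.differentiable (by simp) t).hasDerivAt
    have h2 := (hPs.differentiable (by simp) t).hasDerivAt
    exact ((h1.mul h2).sub_const α).deriv
  -- the value of `2 P w - i P'`
  let y : ℝ → ℂ := fun t => (trig m c t * N t : ℝ) - Complex.I * (deriv M t / b t : ℝ)
  have hy : ∀ t, quadY m c w (cis t) = cis t ^ m * y t := by
    intro t
    rw [quadY_cis]
    congr 1
    have hbt := (hb0 t).ne'
    apply Complex.ext
    · simp [y, hNw]; ring
    · have e : deriv M t / b t = -(2 * (w (cis t)).im) * trig m c t + deriv (trig m c) t := by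
        rw [hM', hbw]; field_simp
      simp only [y, e, Complex.sub_im, Complex.I_mul_im, Complex.ofReal_im, Complex.ofReal_re,
        mul_assoc]
      rw [show (2 : ℂ) = ((2 : ℝ) : ℂ) by norm_num, Complex.im_ofReal_mul, Complex.im_ofReal_mul]
      ring
  have hyim : ∀ t, (y t ^ 2).im = -2 * (M t * deriv M t * (trig m c t / b t)) := by
    intro t
    have h1 := hMN t
    have e : (y t ^ 2).im = -2 * (trig m c t * N t) * (deriv M t / b t) := by
      simp only [y, sq, Complex.mul_im, Complex.sub_im, Complex.sub_re, Complex.I_im, Complex.I_re,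
        Complex.mul_re, Complex.ofReal_im, Complex.ofReal_re]
      ring
    rw [e]
    linear_combination (2 * trig m c t / b t) * h1
  -- flatness
  obtain ⟨CM, hCM0, hCM⟩ := flat_bound (contDiff_infty_iff_deriv.1 hMs).2 (periodic_deriv hMp)
    (fun j => by rw [← iteratedDeriv_succ']; exact hMf (j + 1)) (2 * k + 1)
  obtain ⟨CN, hCN0, hCN⟩ := flat_bound hN hNp hNf (2 * k + 1)
  obtain ⟨CP, hCP0, hCP⟩ := exists_bound_of_periodic hPs.continuous (periodic_trig m c)
  obtain ⟨CB, hCB0, hCB⟩ := exists_bound_of_periodic (f := fun t => (b t)⁻¹)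
    (hb.continuous.inv₀ fun t => (hb0 t).ne') (fun t => by simp only [hbp t])
  set K := CP * CN + CM * CB with hK
  have hK0 : 0 ≤ K := by positivity
  have hyb : ∀ t, ‖y t‖ ≤ K * |sin (t / 2)| ^ (2 * k + 1) := by
    intro t
    refine (norm_sub_le _ _).trans ?_
    rw [norm_mul, Complex.norm_I, one_mul, Complex.norm_real, Complex.norm_real, Real.norm_eq_abs,
      Real.norm_eq_abs, abs_mul, div_eq_mul_inv, abs_mul]
    have h1 := mul_le_mul (hCP t) (hCN t) (abs_nonneg _) hCP0
    have h2 := mul_le_mul (hCM t) (hCB t) (abs_nonneg _) (by positivity)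
    rw [hK]
    linarith
  let F : ℂ → ℂ := fun z =>
    4 ^ k * (Complex.I * (z + 1) * (-1) ^ k * z ^ (k - 2 * m) * quadY m c w z ^ 2)
  have hF : DiskHol F := by
    have h1 : DiskHol fun z : ℂ => Complex.I * (z + 1) * (-1) ^ k * z ^ (k - 2 * m) :=
      diskHol_of_differentiable (by fun_prop)
    exact (h1.mul ((diskHol_quadY m c hw).pow 2)).const_mul _
  have hF0 : F 0 = 0 := by
    have : k - 2 * m ≠ 0 := by omega
    simp [F, this]
  have hFc : ∀ t, F (cis t) = 4 ^ k * (Complex.I * (cis t + 1) * (-1) ^ k * cis t ^ k * y t ^ 2) := by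
    intro t
    have e : cis t ^ k = cis t ^ (k - 2 * m) * (cis t ^ m) ^ 2 := by
      rw [← pow_mul, ← pow_add]; congr 1; omega
    simp only [F, hy, e]
    ring
  have hFb : ∀ t, ‖F (cis t)‖ ≤ (4 ^ k * 2 * K ^ 2) * ‖cis t - 1‖ ^ (2 * k + 1) := by
    intro t
    rw [hFc, norm_cis_sub_one]
    simp only [norm_mul, norm_pow, norm_neg, norm_one, one_pow, mul_one, Complex.norm_I, one_mul,
      norm_cis, Complex.norm_ofNat]
    have h1 : ‖cis t + 1‖ ≤ 2 := by
      refine (norm_add_le _ _).trans ?_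
      rw [norm_cis, norm_one]; norm_num
    have hs1 : |sin (t / 2)| ^ (2 * k + 1) ≤ 1 := pow_le_one₀ (abs_nonneg _) (Real.abs_sin_le_one _)
    have hs2 : |sin (t / 2)| ^ (2 * k + 1) ≤ (2 * |sin (t / 2)|) ^ (2 * k + 1) := by
      apply pow_le_pow_left₀ (abs_nonneg _)
      linarith [abs_nonneg (sin (t / 2))]
    have hs0 : 0 ≤ |sin (t / 2)| ^ (2 * k + 1) := by positivity
    have h2 : ‖y t‖ ^ 2 ≤ K ^ 2 * (2 * |sin (t / 2)|) ^ (2 * k + 1) := by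
      have h3 := pow_le_pow_left₀ (norm_nonneg _) (hyb t) 2
      have h4 : (|sin (t / 2)| ^ (2 * k + 1)) ^ 2 ≤ |sin (t / 2)| ^ (2 * k + 1) := by nlinarith
      calc _ ≤ _ := h3
        _ = K ^ 2 * (|sin (t / 2)| ^ (2 * k + 1)) ^ 2 := by ring
        _ ≤ _ := by gcongr; exact h4.trans hs2
    calc _ ≤ 4 ^ k * (2 * (K ^ 2 * (2 * |sin (t / 2)|) ^ (2 * k + 1))) := by gcongr
      _ = _ := by ring
  obtain ⟨hint, hzero⟩ := integral_div_pow hF hF0 (by omega) hFb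
  have hval : ∀ t, (F (cis t) / (cis t - 1) ^ (2 * k + 1)).im
      = -2 * (M t * deriv M t * (trig m c t / b t) * (cos (t / 2) / sin (t / 2) ^ (2 * k + 1))) := by
    intro t
    rw [hFc, weight_eq, Complex.im_ofReal_mul, hyim]
    ring
  have hint2 : IntervalIntegrable (fun t => (F (cis t) / (cis t - 1) ^ (2 * k + 1)).im)
      volume (-π) π := ⟨hint.1.im, hint.2.im⟩
  have hz2 : ∫ t in (-π)..π, (F (cis t) / (cis t - 1) ^ (2 * k + 1)).im = 0 := by
    have h1 := Complex.imCLM.intervalIntegral_comp_comm hint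
    rw [hzero, map_zero] at h1
    exact h1
  simp only [hval] at hint2 hz2
  rw [intervalIntegral.integral_const_mul] at hz2
  refine ⟨?_, by linarith⟩
  have := hint2.const_mul (-1 / 2)
  refine this.congr_ae (Eventually.of_forall fun t => ?_)
  simp only
  ring

/-! ### Exclusion of mixed boundary conditions -/

lemma sin_half_ne_zero {t : ℝ} (ht : |t| ≤ π) (h0 : t ≠ 0) : sin (t / 2) ≠ 0 := by
  have h1 := abs_sin_half_ge (u := |t|) (abs_nonneg t) ht le_rfl
  have h2 : 0 < sin (|t| / 2) := Real.sin_pos_of_pos_of_lt_pi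
    (by have := abs_pos.2 h0; linarith) (by linarith [Real.pi_pos])
  exact abs_pos.1 (h2.trans_le h1)

/-- Integration by parts of `M ∂_θ M a ω`, `ω(t) = cos(t/2) / sin(t/2)^{2k+1}`: since `M` is flat at
the singularity of `ω`, the function `M² a ω` is continuous there with value `0`. -/
lemma integral_dens {M a : ℝ → ℝ} (hM : ContDiff ℝ (⊤ : ℕ∞) M)
    (hMp : Function.Periodic M (2 * π)) (hMf : ∀ j, iteratedDeriv j M 0 = 0)
    (ha : ContDiff ℝ (⊤ : ℕ∞) a) (hap : Function.Periodic a (2 * π)) (k : ℕ)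
    (hint : IntervalIntegrable (fun t => M t * deriv M t * a t
        * (cos (t / 2) / sin (t / 2) ^ (2 * k + 1))) volume (-π) π)
    (hzero : ∫ t in (-π)..π, M t * deriv M t * a t
        * (cos (t / 2) / sin (t / 2) ^ (2 * k + 1)) = 0) :
    IntervalIntegrable (dens M a (deriv a) k) volume (-π) π ∧
      ∫ t in (-π)..π, dens M a (deriv a) k t = 0 := by
  have hpi := Real.pi_pos
  have hM0 : M 0 = 0 := by simpa using hMf 0
  have hac' : Continuous (deriv a) := (contDiff_infty_iff_deriv.1 ha).2.continuous
  obtain ⟨C, hC0, hC⟩ := flat_bound hM hMp hMf (k + 1)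
  obtain ⟨A, hA0, hA⟩ := exists_bound_of_periodic ha.continuous hap
  obtain ⟨A', hA'0, hA'⟩ := exists_bound_of_periodic hac' (periodic_deriv hap)
  have hC2 : ∀ t, M t ^ 2 ≤ C ^ 2 * |sin (t / 2)| ^ (2 * k + 2) := by
    intro t
    rw [← sq_abs]
    calc |M t| ^ 2 ≤ (C * |sin (t / 2)| ^ (k + 1)) ^ 2 :=
          pow_le_pow_left₀ (abs_nonneg _) (hC t) 2
      _ = _ := by rw [mul_pow, ← pow_mul]; ring_nf
  have hdens : IntervalIntegrable (dens M a (deriv a) k) volume (-π) π := by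
    apply intervalIntegrable_of_bdd (C := C ^ 2 * (A / 2 * (1 + (2 * k + 1)) + A'))
    · apply Measurable.aestronglyMeasurable
      unfold dens
      have h1 := hM.continuous
      have h2 := ha.continuous
      apply Measurable.mul (by fun_prop)
      apply Measurable.div
      · apply Continuous.measurable; fun_prop
      · apply Continuous.measurable; fun_prop
    · intro t
      rw [Real.norm_eq_abs, dens, abs_mul, abs_div, abs_pow (sin _), abs_of_nonneg (sq_nonneg (M t))]
      have hX : |a t / 2 * (sin (t / 2) ^ 2 + (2 * k + 1) * cos (t / 2) ^ 2)
          - deriv a t * cos (t / 2) * sin (t / 2)| ≤ A / 2 * (1 + (2 * k + 1)) + A' := by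
        refine (abs_sub _ _).trans (add_le_add ?_ ?_)
        · rw [abs_mul, abs_div, abs_two]
          have h1 := hA t
          have h2 : |sin (t / 2) ^ 2 + (2 * k + 1) * cos (t / 2) ^ 2| ≤ (1 + (2 * k + 1) : ℝ) := by
            rw [abs_of_nonneg (by positivity)]
            have := Real.sin_sq_le_one (t / 2)
            have := Real.cos_sq_le_one (t / 2)
            have : (2 * k + 1) * cos (t / 2) ^ 2 ≤ (2 * k + 1) * 1 := by gcongr
            linarith
          gcongr
        · rw [abs_mul, abs_mul]
          have h1 := hA' t
          have h2 := Real.abs_cos_le_one (t / 2)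
          have h3 := Real.abs_sin_le_one (t / 2)
          calc _ ≤ A' * 1 * 1 := by gcongr
            _ = A' := by ring
      set X := |a t / 2 * (sin (t / 2) ^ 2 + (2 * k + 1) * cos (t / 2) ^ 2)
          - deriv a t * cos (t / 2) * sin (t / 2)|
      have hX0 : 0 ≤ X := abs_nonneg _
      calc M t ^ 2 * (X / |sin (t / 2)| ^ (2 * k + 2))
          ≤ (C ^ 2 * |sin (t / 2)| ^ (2 * k + 2)) * (X / |sin (t / 2)| ^ (2 * k + 2)) := by
            gcongr; exact hC2 t
        _ = C ^ 2 * X * (|sin (t / 2)| ^ (2 * k + 2) / |sin (t / 2)| ^ (2 * k + 2)) := by ring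
        _ ≤ C ^ 2 * X * 1 := by gcongr; exact div_self_le_one _
        _ ≤ _ := by rw [mul_one]; gcongr
  refine ⟨hdens, ?_⟩
  let E : ℝ → ℝ := fun t => M t ^ 2 * a t * (cos (t / 2) / sin (t / 2) ^ (2 * k + 1))
  have hd : ∀ t, |t| ≤ π → t ≠ 0 → HasDerivAt E
      (2 * (M t * deriv M t * a t * (cos (t / 2) / sin (t / 2) ^ (2 * k + 1)))
        - dens M a (deriv a) k t) t := by
    intro t ht h0
    have hs := sin_half_ne_zero ht h0
    have h1 := (hM.differentiable (by simp) t).hasDerivAt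
    have h2 := (ha.differentiable (by simp) t).hasDerivAt
    have h3 : HasDerivAt (fun t : ℝ => t / 2) (1 / 2) t := (hasDerivAt_id t).div_const 2
    have h4 := h3.sin
    have h5 := h3.cos
    have h6 := ((h1.fun_pow 2).fun_mul h2).fun_mul (h5.fun_div (h4.fun_pow (2 * k + 1)) (pow_ne_zero _ hs))
    refine h6.congr_deriv ?_
    unfold dens
    simp only [Nat.add_sub_cancel]
    field_simp
    push_cast
    ring
  have hE0 : E 0 = 0 := by simp [E]
  have hcont : ContinuousOn E (Set.uIcc (-π) π) := by
    rw [Set.uIcc_of_le (by linarith)]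
    intro t ht
    apply ContinuousAt.continuousWithinAt
    by_cases h0 : t = 0
    · subst h0
      rw [ContinuousAt, hE0]
      have hlim : Tendsto (fun t : ℝ => C ^ 2 * A * |sin (t / 2)|) (𝓝 0) (𝓝 0) := by
        have : Continuous fun t : ℝ => C ^ 2 * A * |sin (t / 2)| := by fun_prop
        simpa using this.tendsto 0
      refine squeeze_zero_norm (fun t => ?_) hlim
      rw [Real.norm_eq_abs, abs_mul, abs_mul, abs_div, abs_pow (sin _),
        abs_of_nonneg (sq_nonneg (M t))]
      have h1 := hA t
      have h3 := Real.abs_cos_le_one (t / 2)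
      calc M t ^ 2 * |a t| * (|cos (t / 2)| / |sin (t / 2)| ^ (2 * k + 1))
          ≤ (C ^ 2 * |sin (t / 2)| ^ (2 * k + 2)) * A * (1 / |sin (t / 2)| ^ (2 * k + 1)) := by
            gcongr; exact hC2 t
        _ = C ^ 2 * A * |sin (t / 2)| * (|sin (t / 2)| ^ (2 * k + 1) / |sin (t / 2)| ^ (2 * k + 1)) := by
            ring
        _ ≤ C ^ 2 * A * |sin (t / 2)| * 1 := by gcongr; exact div_self_le_one _
        _ = _ := mul_one _
    · exact (hd t (abs_le.2 ht) h0).continuousAt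
  have hFTC := integral_eq_of_hasDerivAt_off_countable E _ (Set.countable_singleton 0) hcont
    (fun t ht => by
      obtain ⟨ht1, ht2⟩ := ht
      rw [min_eq_left (by linarith), max_eq_right (by linarith)] at ht1
      exact hd t (abs_le.2 ⟨ht1.1.le, ht1.2.le⟩) ht2)
    ((hint.const_mul 2).sub hdens)
  rw [intervalIntegral.integral_sub (hint.const_mul 2) hdens, intervalIntegral.integral_const_mul,
    hzero] at hFTC
  have e1 : E π = 0 := by simp [E]
  have e2 : E (-π) = 0 := by simp [E, neg_div]
  rw [e1, e2] at hFTC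
  linarith

/-- If `M = b P - α` and `N = 2 Re w` are both flat at the point `1` of the circle and at each point
`M'(M - N) = 0`, then `M` vanishes near `1`. -/
lemma eventually_zero_of_flat (m : ℕ) (c : ℕ → ℂ) {α : ℝ} (hα : 0 < α) {w : ℂ → ℂ} {b N M : ℝ → ℝ}
    (hw : DiskHol w) (hb : ContDiff ℝ (⊤ : ℕ∞) b) (hbp : Function.Periodic b (2 * π))
    (hb0 : ∀ θ, 0 < b θ) (hbw : ∀ θ, deriv b θ = b θ * (-(2 * (w (cis θ)).im)))
    (hN : ContDiff ℝ (⊤ : ℕ∞) N) (hNw : ∀ θ, N θ = 2 * (w (cis θ)).re)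
    (hM : ∀ θ, M θ = b θ * trig m c θ - α) (hMN : ∀ θ, deriv M θ * (M θ - N θ) = 0)
    (hMf : ∀ j, iteratedDeriv j M 0 = 0) (hNf : ∀ j, iteratedDeriv j N 0 = 0) :
    ∀ᶠ t in 𝓝 (0 : ℝ), M t = 0 := by
  have hPs : ContDiff ℝ (⊤ : ℕ∞) (trig m c) := contDiff_trig m c
  have hMs : ContDiff ℝ (⊤ : ℕ∞) M := by
    rw [funext hM]; exact (hb.mul hPs).sub contDiff_const
  have hMp : Function.Periodic M (2 * π) := fun t => by
    rw [hM, hM, hbp, periodic_trig]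
  have has : ContDiff ℝ (⊤ : ℕ∞) fun t => trig m c t / b t := hPs.div hb fun t => (hb0 t).ne'
  have hap : Function.Periodic (fun t => trig m c t / b t) (2 * π) := fun t => by
    simp only [periodic_trig m c t, hbp t]
  have hM0 : M 0 = 0 := by simpa using hMf 0
  have ha0 : 0 < trig m c 0 / b 0 := by
    have h1 : b 0 * trig m c 0 = α := by have := hM 0; linarith
    have h2 : 0 < trig m c 0 := pos_of_mul_pos_right (h1 ▸ hα) (hb0 0).le
    exact div_pos h2 (hb0 0)
  have key : ∀ k ≥ 2 * m + 1, _ := fun k hk =>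
    have h := integral_weight m c hw hb hbp hb0 hbw hN hNw hM hMN hMf hNf k hk
    integral_dens hMs hMp hMf has hap k h.1 h.2
  exact eventually_zero_of_dens hMs.continuous hM0 has.continuous
    (contDiff_infty_iff_deriv.1 has).2.continuous ha0 (2 * m + 1)
    (fun k hk => (key k hk).1) (fun k hk => (key k hk).2)

lemma iteratedDeriv_eq_of_mem_closure {f g : ℝ → ℝ} (hf : ContDiff ℝ (⊤ : ℕ∞) f)
    (hg : ContDiff ℝ (⊤ : ℕ∞) g) {U : Set ℝ} (hU : IsOpen U) (h : Set.EqOn f g U) {x : ℝ}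
    (hx : x ∈ closure U) (j : ℕ) : iteratedDeriv j f x = iteratedDeriv j g x := by
  have hj : ((j : ℕ∞) : WithTop ℕ∞) ≤ ((⊤ : ℕ∞) : WithTop ℕ∞) := by exact_mod_cast le_top
  have h1 : Set.EqOn (iteratedDeriv j f) (iteratedDeriv j g) U := fun y hy =>
    Filter.EventuallyEq.iteratedDeriv_eq j (h.eventuallyEq_of_mem (hU.mem_nhds hy))
  exact h1.closure (hf.continuous_iteratedDeriv j hj) (hg.continuous_iteratedDeriv j hj) hx

/-- If at every boundary point the boundary equation holds either with the normal derivative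
`N = 2 Re w` or with `0` in its place, then the same alternative holds at all points. -/
lemma no_mixing (m : ℕ) (c : ℕ → ℂ) {α : ℝ} (hα : 0 < α) {w : ℂ → ℂ} {b N M : ℝ → ℝ}
    (hw : DiskHol w) (hb : ContDiff ℝ (⊤ : ℕ∞) b) (hbp : Function.Periodic b (2 * π))
    (hb0 : ∀ θ, 0 < b θ) (hbw : ∀ θ, deriv b θ = b θ * (-(2 * (w (cis θ)).im)))
    (hN : ContDiff ℝ (⊤ : ℕ∞) N) (hNw : ∀ θ, N θ = 2 * (w (cis θ)).re)
    (hM : ∀ θ, M θ = b θ * trig m c θ - α) (hMN : ∀ θ, M θ = 0 ∨ M θ = N θ) :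
    (∀ θ, M θ = 0) ∨ ∀ θ, M θ = N θ := by
  have hPs : ContDiff ℝ (⊤ : ℕ∞) (trig m c) := contDiff_trig m c
  have hMs : ContDiff ℝ (⊤ : ℕ∞) M := by
    rw [funext hM]; exact (hb.mul hPs).sub contDiff_const
  have hV : IsOpen {θ | M θ ≠ N θ} := isOpen_ne_fun hMs.continuous hN.continuous
  have hMev : ∀ θ, M θ ≠ N θ → M =ᶠ[𝓝 θ] fun _ => 0 := fun θ hθ => by
    filter_upwards [hV.mem_nhds hθ] with t ht using (hMN t).resolve_right ht
  have hM'N : ∀ θ, deriv M θ * (M θ - N θ) = 0 := by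
    intro θ
    by_cases h : M θ = N θ
    · simp [h]
    · rw [(hMev θ h).deriv_eq]; simp
  rw [or_iff_not_imp_right]
  intro hne
  push Not at hne
  obtain ⟨θ₁, hθ₁⟩ := hne
  -- the open set on which the first alternative holds
  set W := interior {θ | M θ = 0} with hW
  have hWo : IsOpen W := isOpen_interior
  have hMW : Set.EqOn M (fun _ => 0) W := fun θ hθ => by
    have h : θ ∈ {θ | M θ = 0} := interior_subset hθ
    exact h
  have hθ₁W : θ₁ ∈ W := mem_interior_iff_mem_nhds.2 (hMev θ₁ hθ₁)
  -- `W` is closed, by flatness at its boundary points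
  have hWc : IsClosed W := by
    refine isClosed_of_closure_subset fun θ₀ hθ₀ => ?_
    by_contra hout
    have hMf : ∀ j, iteratedDeriv j M θ₀ = 0 := fun j => by
      rw [iteratedDeriv_eq_of_mem_closure hMs contDiff_const hWo hMW hθ₀ j]
      simp
    have hNf : ∀ j, iteratedDeriv j N θ₀ = 0 := fun j => by
      have hU : IsOpen {θ | M θ ≠ 0} := isOpen_ne_fun hMs.continuous continuous_const
      have hcl : θ₀ ∈ closure {θ | M θ ≠ 0} := by
        have : {θ | M θ ≠ 0} = {θ | M θ = 0}ᶜ := rfl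
        rw [this, closure_compl]
        exact hout
      rw [iteratedDeriv_eq_of_mem_closure hN hMs hU
        (fun θ hθ => ((hMN θ).resolve_left hθ).symm) hcl j, hMf j]
    -- rotate `θ₀` to `0`
    have hanal : ∀ t, anal m (fun j => c j * cis θ₀ ^ j) (cis t) = anal m c (cis (t + θ₀)) := by
      intro t
      simp only [anal, cis_add, mul_pow]
      exact Finset.sum_congr rfl fun j _ => by ring
    have htrig : ∀ t, trig m (fun j => c j * cis θ₀ ^ j) t = trig m c (t + θ₀) := fun t => by
      rw [trig, trig, hanal]
    have hwr : DiskHol fun z => w (z * cis θ₀) := by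
      have hn : ∀ z : ℂ, ‖z * cis θ₀‖ = ‖z‖ := fun z => by rw [norm_mul, norm_cis, mul_one]
      apply DiskHol.of
      · refine hw.1.comp (by fun_prop) fun z hz => ?_
        simpa [hn] using hz
      · refine hw.continuousOn_closedBall.comp (by fun_prop) fun z hz => ?_
        simpa [hn] using hz
    have hev := eventually_zero_of_flat m (fun j => c j * cis θ₀ ^ j) hα (w := fun z => w (z * cis θ₀))
      (b := fun t => b (t + θ₀)) (N := fun t => N (t + θ₀)) (M := fun t => M (t + θ₀)) hwr
      (hb.comp (by fun_prop)) (fun t => by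
        show b (t + 2 * π + θ₀) = b (t + θ₀)
        rw [show t + 2 * π + θ₀ = t + θ₀ + 2 * π by ring, hbp])
      (fun t => hb0 _) (fun t => by rw [deriv_comp_add_const, hbw, cis_add])
      (hN.comp (by fun_prop)) (fun t => by rw [hNw, cis_add])
      (fun t => by rw [hM, htrig]) (fun t => by rw [deriv_comp_add_const]; exact hM'N _)
      (fun j => by rw [iteratedDeriv_comp_add_const]; simpa using hMf j)
      (fun j => by rw [iteratedDeriv_comp_add_const]; simpa using hNf j)
    apply hout
    rw [hW, mem_interior_iff_mem_nhds]
    have hsub : Tendsto (fun θ => θ - θ₀) (𝓝 θ₀) (𝓝 0) := by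
      have : Continuous fun θ : ℝ => θ - θ₀ := by fun_prop
      simpa using this.tendsto θ₀
    filter_upwards [hsub.eventually hev] with θ hθ
    simpa using hθ
  have huniv : W = Set.univ := IsClopen.eq_univ ⟨hWc, hWo⟩ ⟨θ₁, hθ₁W⟩
  intro θ
  exact hMW (huniv ▸ Set.mem_univ θ)

/-! ### The harmonic function and its boundary values -/

lemma uniqueDiffOn_disk : UniqueDiffOn ℝ (Metric.closedBall (0 : ℂ) 1) := by
  apply uniqueDiffOn_convex (convex_closedBall _ _)
  rw [interior_closedBall (0 : ℂ) one_ne_zero]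
  exact Metric.nonempty_ball.2 one_pos

/-- The function `z ∂_z v`, with the derivative taken within the closed disk. -/
noncomputable def dz (v : ℂ → ℝ) (z : ℂ) : ℂ :=
  z * ((fderivWithin ℝ v (Metric.closedBall 0 1) z 1 : ℂ)
    - Complex.I * (fderivWithin ℝ v (Metric.closedBall 0 1) z Complex.I : ℂ)) / 2

lemma clm_eq (L : ℂ →L[ℝ] ℝ) (z : ℂ) : L z = z.re * L 1 + z.im * L Complex.I := by
  have h : z = z.re • (1 : ℂ) + z.im • Complex.I := by simp
  conv_lhs => rw [h]
  rw [map_add, map_smul, map_smul, smul_eq_mul, smul_eq_mul]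

lemma two_re_dz (v : ℂ → ℝ) (z : ℂ) :
    2 * (dz v z).re = fderivWithin ℝ v (Metric.closedBall 0 1) z z := by
  rw [clm_eq (fderivWithin ℝ v (Metric.closedBall 0 1) z) z, dz, Complex.div_ofNat_re]
  simp [Complex.mul_re]
  ring

lemma two_im_dz (v : ℂ → ℝ) (z : ℂ) :
    -(2 * (dz v z).im) = fderivWithin ℝ v (Metric.closedBall 0 1) z (Complex.I * z) := by
  rw [clm_eq (fderivWithin ℝ v (Metric.closedBall 0 1) z) (Complex.I * z), dz, Complex.div_ofNat_im]
  simp [Complex.mul_im]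
  ring

lemma diskHol_dz {v : ℂ → ℝ} (hv : ContDiffOn ℝ (⊤ : ℕ∞) v (Metric.closedBall 0 1))
    (hharm : ∀ z ∈ Metric.ball (0 : ℂ) 1,
      (iteratedFDeriv ℝ 2 v z) ![1, 1] +
        (iteratedFDeriv ℝ 2 v z) ![Complex.I, Complex.I] = 0) : DiskHol (dz v) := by
  apply DiskHol.of
  · have hnhd : ∀ z ∈ Metric.ball (0 : ℂ) 1, Metric.closedBall (0 : ℂ) 1 ∈ 𝓝 z := fun z hz =>
      Filter.mem_of_superset (Metric.isOpen_ball.mem_nhds hz) Metric.ball_subset_closedBall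
    intro z hz
    have hh : InnerProductSpace.HarmonicAt v z := by
      refine ⟨(hv.contDiffAt (hnhd z hz)).of_le ?_, ?_⟩
      · exact WithTop.coe_le_coe.2 (le_top : (2 : ℕ∞) ≤ ⊤)
      · filter_upwards [Metric.isOpen_ball.mem_nhds hz] with y hy
        rw [InnerProductSpace.laplacian_eq_iteratedFDeriv_complexPlane]
        exact hharm y hy
    have h1 := HarmonicAt.differentiableAt_complex_partial hh
    have h2 : DifferentiableAt ℂ (fun z => z * ((fderiv ℝ v z 1 : ℂ)
        - Complex.I * (fderiv ℝ v z Complex.I : ℂ)) / 2) z :=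
      (differentiableAt_id.fun_mul h1).div_const 2
    refine (h2.congr_of_eventuallyEq ?_).differentiableWithinAt
    filter_upwards [Metric.isOpen_ball.mem_nhds hz] with y hy
    rw [dz, fderivWithin_of_mem_nhds (hnhd y hy)]
  · have h := (hv.fderivWithin uniqueDiffOn_disk (m := 0) (by simp)).continuousOn
    have h1 : ContinuousOn (fun z => fderivWithin ℝ v (Metric.closedBall 0 1) z 1)
      (Metric.closedBall (0 : ℂ) 1) := h.clm_apply continuousOn_const
    have h2 : ContinuousOn (fun z => fderivWithin ℝ v (Metric.closedBall 0 1) z Complex.I)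
      (Metric.closedBall (0 : ℂ) 1) := h.clm_apply continuousOn_const
    unfold dz
    exact (continuousOn_id.mul ((Complex.continuous_ofReal.comp_continuousOn h1).sub
      (continuousOn_const.mul (Complex.continuous_ofReal.comp_continuousOn h2)))).div_const 2

/-- Where `v` has no full derivative at a boundary point, `fderiv` takes the value `0`. -/
lemma fderiv_eq_or (v : ℂ → ℝ) {z : ℂ} (hz : z ∈ Metric.closedBall (0 : ℂ) 1) :
    fderiv ℝ v z = 0 ∨ fderiv ℝ v z = fderivWithin ℝ v (Metric.closedBall 0 1) z := by
  by_cases h : DifferentiableAt ℝ v z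
  · exact .inr (h.fderivWithin (uniqueDiffOn_disk z hz)).symm
  · exact .inl (fderiv_zero_of_not_differentiableAt h)

theorem boundary_fourier_coefficients_vanish
    (m : ℕ) (α : ℝ) (hα : 0 < α) (v : ℂ → ℝ) (c : ℕ → ℂ)
    (hsmooth : ContDiffOn ℝ (⊤ : ℕ∞) v (Metric.closedBall 0 1))
    (hharm : ∀ z ∈ Metric.ball (0 : ℂ) 1,
      (iteratedFDeriv ℝ 2 v z) ![1, 1] +
        (iteratedFDeriv ℝ 2 v z) ![Complex.I, Complex.I] = 0)
    (horth : ∀ k : ℕ, 1 ≤ k → k ≤ m →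
      (∫ θ in (0 : ℝ)..(2 * π),
        (Real.exp (v (Complex.exp (θ * Complex.I))) : ℂ) *
          Complex.exp (k * θ * Complex.I)) = 0)
    (hbc : ∀ θ : ℝ,
      ((fderiv ℝ v (Complex.exp (θ * Complex.I)) (Complex.exp (θ * Complex.I)) : ℝ) : ℂ)
          + (α : ℂ) =
        (Real.exp (v (Complex.exp (θ * Complex.I))) : ℂ) *
          (1 + ∑ k ∈ Finset.Icc 1 m,
            (c k * Complex.exp (k * θ * Complex.I) +
              (starRingEnd ℂ) (c k) * Complex.exp (-(k * θ) * Complex.I)))) :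
    ∀ k : ℕ, 1 ≤ k → k ≤ m → c k = 0 := by
  set w := dz v
  have hw : DiskHol w := diskHol_dz hsmooth hharm
  have hw0 : w 0 = 0 := by simp [w, dz]
  have hvs : ContDiff ℝ (⊤ : ℕ∞) fun θ => v (cis θ) := by
    rw [← contDiffOn_univ]
    exact hsmooth.comp contDiff_cis.contDiffOn fun θ _ => cis_mem θ
  have hvd : ∀ θ, HasDerivAt (fun θ => v (cis θ)) (-(2 * (w (cis θ)).im)) θ := fun θ => by
    rw [two_im_dz, ← hasDerivWithinAt_univ]
    have h1 := ((hsmooth.differentiableOn (by simp)) (cis θ) (cis_mem θ)).hasFDerivWithinAt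
    exact h1.comp_hasDerivWithinAt θ (hasDerivAt_cis θ).hasDerivWithinAt fun t _ => cis_mem t
  set b : ℝ → ℝ := fun θ => Real.exp (v (cis θ)) with hb_def
  have hb : ContDiff ℝ (⊤ : ℕ∞) b := hvs.exp
  have hbp : Function.Periodic b (2 * π) := fun θ => by simp only [b, periodic_cis θ]
  have hb0 : ∀ θ, 0 < b θ := fun θ => Real.exp_pos _
  have hbw : ∀ θ, deriv b θ = b θ * (-(2 * (w (cis θ)).im)) := fun θ => (hvd θ).exp.deriv
  set N : ℝ → ℝ := fun θ => fderivWithin ℝ v (Metric.closedBall 0 1) (cis θ) (cis θ) with hN_def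
  have hN : ContDiff ℝ (⊤ : ℕ∞) N := by
    have h := hsmooth.fderivWithin uniqueDiffOn_disk (m := (⊤ : ℕ∞)) (by simp)
    have h' : ContDiff ℝ (⊤ : ℕ∞) fun θ => fderivWithin ℝ v (Metric.closedBall 0 1) (cis θ) := by
      rw [← contDiffOn_univ]
      exact h.comp contDiff_cis.contDiffOn fun θ _ => cis_mem θ
    exact h'.clm_apply contDiff_cis
  have hNw : ∀ θ, N θ = 2 * (w (cis θ)).re := fun θ => (two_re_dz v (cis θ)).symm
  have hbP : ∀ θ, fderiv ℝ v (cis θ) (cis θ) + α = b θ * trig m c θ := fun θ => by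
    have h := hbc θ
    rw [← cis_def] at h
    rw [← Complex.ofReal_inj, Complex.ofReal_add, h, Complex.ofReal_mul, ofReal_trig,
      conj_anal_cis, anal, add_assoc, ← Finset.sum_add_distrib]
    congr 2
    refine Finset.sum_congr rfl fun k _ => ?_
    rw [inv_pow, cis_pow, ← Complex.exp_neg, neg_mul]
  obtain ⟨a, β, γ, hβ, hγ, hbβ, hbγ⟩ := exists_projection hb hbp m fun k hk1 hkm => by
    simp only [cis_pow]
    exact horth k hk1 hkm
  rcases no_mixing m c hα hw hb hbp hb0 hbw hN hNw (M := fun θ => b θ * trig m c θ - α)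
    (fun θ => rfl) (fun θ => by
      simp only [← hbP]
      rcases fderiv_eq_or v (cis_mem θ) with h | h
      · left; simp [h]
      · right; simp [h, N]) with h | h
  · exact case_const m c hα hβ hbβ fun θ => by linarith [h θ]
  · exact case_normal m c hα hβ hγ hw hw0 hbβ hbγ hbw fun θ => by linarith [h θ, hNw θ]
end
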